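/- arXiv:math/0101161 — 10 statements merged into one kernel-verified Lean document; each statement's English description precedes it below -/
import Mathlib

section
/- The set of lattice points α in the D₄ root lattice M = {α ∈ ℤ⁴ : α₁+α₂+α₃+α₄ is even} satisfying ⟨τ,α⟩ ≥ −1 for every τ ∈ S and ⟨τ,α⟩ ≥ −2 for every τ ∈ R is exactly {0} ∪ D₄, where D₄ = {±e_i ± e_j : 1 ≤ i < j ≤ 4}; in particular this set has exactly 25 elements. -/
/-!
Statement 0: The set of lattice points α in the D₄ root lattice
M = {α ∈ ℤ⁴ : α₁+α₂+α₃+α₄ even} satisfying ⟨τ,α⟩ ≥ −1 for all τ ∈ S and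
⟨τ,α⟩ ≥ −2 for all τ ∈ R is exactly {0} ∪ D₄, and has 25 elements.
-/

noncomputable section

namespace Stmt0

/-- The standard inner product on ℚ⁴. -/
def inn (x y : Fin 4 → ℚ) : ℚ := ∑ i, x i * y i

/-- The standard basis vectors of ℚ⁴. -/
def e (i : Fin 4) : Fin 4 → ℚ := Pi.single i 1

/-- The 24 roots of `D₄`: `±e_i ± e_j` with `i < j`. -/
def D4 : Set (Fin 4 → ℚ) :=
  {τ | ∃ i j : Fin 4, i < j ∧
    (τ = e i + e j ∨ τ = e i - e j ∨ τ = -e i + e j ∨ τ = -e i - e j)}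

/-- The set `S`: the vectors `±e_i` together with `(±e₁±e₂±e₃±e₄)/2`. -/
def S : Set (Fin 4 → ℚ) :=
  {τ | (∃ i, τ = e i ∨ τ = -e i) ∨
    ∃ s : Fin 4 → Bool, τ = (1/2 : ℚ) • ∑ i, (if s i then (1:ℚ) else -1) • e i}

/-- The set `R`: the vectors `±e_i ± e_j`, `i < j`. -/
def R : Set (Fin 4 → ℚ) := D4

/-- The root lattice of `D₄`: integral vectors with even coordinate sum. -/
def M : Set (Fin 4 → ℚ) :=
  {α | (∀ i, ∃ n : ℤ, α i = n) ∧ ∃ m : ℤ, (∑ i, α i) = 2 * m}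

/-- Integer model of the point set. -/
def F : Finset (Fin 4 → ℤ) :=
  (Fintype.piFinset (fun _ : Fin 4 => ({-1, 0, 1} : Finset ℤ))).filter
    (fun n => 2 ∣ ∑ i, n i ∧ ∑ i, |n i| ≤ 2)

/-- Coordinatewise cast. -/
def c (n : Fin 4 → ℤ) : Fin 4 → ℚ := fun i => (n i : ℚ)

/-- Integer basis vector. -/
def ez (i : Fin 4) : Fin 4 → ℤ := Pi.single i 1

lemma c_inj : Function.Injective c := by
  intro a b h
  funext i
  have := congrFun h i
  simpa [c] using this

lemma c_ez (i : Fin 4) : c (ez i) = e i := by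
  funext j
  by_cases h : j = i
  · subst h; simp [c, ez, e]
  · simp [c, ez, e, h]

lemma c_add (a b) : c (a + b) = c a + c b := by funext i; simp [c]
lemma c_sub (a b) : c (a - b) = c a - c b := by funext i; simp [c]
lemma c_neg (a) : c (-a) = -c a := by funext i; simp [c]
lemma c_zero : c 0 = 0 := by funext i; simp [c]

lemma F_card : F.card = 25 := by decide +kernel

lemma F_D4 : ∀ n ∈ F, n = 0 ∨ ∃ i j : Fin 4, i < j ∧
    (n = ez i + ez j ∨ n = ez i - ez j ∨ n = -ez i + ez j ∨ n = -ez i - ez j) := by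
  decide +kernel

lemma D4_F : ∀ i j : Fin 4, i < j →
    (ez i + ez j ∈ F ∧ ez i - ez j ∈ F ∧ -ez i + ez j ∈ F ∧ -ez i - ez j ∈ F) := by
  decide +kernel

lemma zero_F : 0 ∈ F := by decide +kernel

lemma F_half : ∀ n ∈ F, ∀ s : Fin 4 → Bool,
    -2 ≤ ∑ i, (if s i then (1 : ℤ) else -1) * n i := by decide +kernel

lemma F_bd : ∀ n ∈ F, ∀ i, -1 ≤ n i ∧ n i ≤ 1 := by decide +kernel

lemma inn_e (i : Fin 4) (α) : inn (e i) α = α i := by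
  simp [inn, e, Pi.single_apply]
lemma inn_add (a b α) : inn (a + b) α = inn a α + inn b α := by
  simp [inn, add_mul, Finset.sum_add_distrib]
lemma inn_neg (a α) : inn (-a) α = - inn a α := by
  simp [inn]
lemma inn_sub (a b α) : inn (a - b) α = inn a α - inn b α := by
  rw [sub_eq_add_neg, inn_add, inn_neg, sub_eq_add_neg]

lemma inn_half (s : Fin 4 → Bool) (n : Fin 4 → ℤ) :
    inn ((1/2 : ℚ) • ∑ i, (if s i then (1:ℚ) else -1) • e i) (c n)
      = ((∑ i, (if s i then (1 : ℤ) else -1) * n i : ℤ) : ℚ) / 2 := by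
  have : ∀ k, (∑ i, (if s i then (1:ℚ) else -1) • e i) k = if s k then 1 else -1 := by
    intro k
    simp only [Finset.sum_apply, Pi.smul_apply, e, Pi.single_apply, smul_eq_mul, mul_ite, mul_one, mul_zero, Finset.sum_ite_eq, Finset.mem_univ, if_true]
  simp only [inn, Pi.smul_apply, this, smul_eq_mul, c]
  push_cast
  rw [Finset.sum_div]
  refine Finset.sum_congr rfl fun i _ => ?_
  ring

lemma D4_eq : insert 0 D4 = c '' (F : Set (Fin 4 → ℤ)) := by
  ext α
  constructor
  · rintro (rfl | ⟨i, j, hij, h⟩)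
    · exact ⟨0, zero_F, c_zero⟩
    · obtain ⟨h1, h2, h3, h4⟩ := D4_F i j hij
      rcases h with rfl | rfl | rfl | rfl
      · exact ⟨_, h1, by simp only [c_add, c_ez]⟩
      · exact ⟨_, h2, by simp only [c_sub, c_ez]⟩
      · exact ⟨_, h3, by simp only [c_add, c_neg, c_ez]⟩
      · exact ⟨_, h4, by simp only [c_sub, c_neg, c_ez]⟩
  · rintro ⟨n, hn, rfl⟩
    rcases F_D4 n hn with rfl | ⟨i, j, hij, h⟩
    · exact Or.inl c_zero
    · refine Or.inr ⟨i, j, hij, ?_⟩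
      rcases h with rfl | rfl | rfl | rfl <;> simp only [c_add, c_sub, c_neg, c_ez, true_or, or_true]

lemma set_eq : {α ∈ M | (∀ τ ∈ S, -1 ≤ inn τ α) ∧ ∀ τ ∈ R, -2 ≤ inn τ α}
    = c '' (F : Set (Fin 4 → ℤ)) := by
  ext α
  constructor
  · rintro ⟨⟨hint, m, hm⟩, hS, -⟩
    choose n hn using hint
    obtain rfl : α = c n := funext hn
    refine ⟨n, ?_, rfl⟩
    have hsum : ∑ i, n i = 2 * m := by
      simp only [c] at hm
      exact_mod_cast hm
    have hb : ∀ i, -1 ≤ n i ∧ n i ≤ 1 := by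
      intro i
      have h1 := hS (e i) (Or.inl ⟨i, Or.inl rfl⟩)
      have h2 := hS (-e i) (Or.inl ⟨i, Or.inr rfl⟩)
      rw [inn_neg] at h2
      rw [inn_e] at h1 h2
      simp only [c] at h1 h2
      constructor
      · exact_mod_cast h1
      · have : (n i : ℚ) ≤ 1 := by linarith
        exact_mod_cast this
    have ha : ∑ i, |n i| ≤ 2 := by
      have h := hS _ (Or.inr ⟨fun i => decide (n i < 0), rfl⟩)
      rw [inn_half] at h
      have h' : (-2 : ℚ) ≤ ((∑ i, (if decide (n i < 0) then (1 : ℤ) else -1) * n i : ℤ) : ℚ) := by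
        linarith
      have h'' : (-2 : ℤ) ≤ ∑ i, (if decide (n i < 0) then (1 : ℤ) else -1) * n i := by
        exact_mod_cast h'
      have : ∑ i, (if decide (n i < 0) then (1 : ℤ) else -1) * n i = - ∑ i, |n i| := by
        rw [← Finset.sum_neg_distrib]
        refine Finset.sum_congr rfl fun i _ => ?_
        by_cases hi : n i < 0
        · simp [hi, abs_of_neg hi]
        · simp [hi, abs_of_nonneg (not_lt.mp hi)]
      linarith
    simp only [F, Finset.coe_filter, Set.mem_setOf_eq, Fintype.mem_piFinset]
    refine ⟨fun i => ?_, ⟨m, hsum⟩, ha⟩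
    have := hb i
    simp only [Finset.mem_insert, Finset.mem_singleton]
    omega
  · rintro ⟨n, hn, rfl⟩
    have hb : ∀ i, (-1 : ℚ) ≤ c n i ∧ c n i ≤ 1 := by
      intro i
      have := F_bd n hn i
      simp only [c]
      exact_mod_cast this
    refine ⟨⟨fun i => ⟨n i, rfl⟩, ?_⟩, ?_, ?_⟩
    · obtain ⟨m, hm⟩ := (Finset.mem_filter.mp hn).2.1
      refine ⟨m, ?_⟩
      simp only [c]
      exact_mod_cast hm
    · rintro τ (⟨i, rfl | rfl⟩ | ⟨s, rfl⟩)
      · rw [inn_e]; exact (hb i).1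
      · rw [inn_neg, inn_e]; linarith [(hb i).2]
      · rw [inn_half]
        have h : (-2 : ℚ) ≤ ((∑ i, (if s i then (1 : ℤ) else -1) * n i : ℤ) : ℚ) := by
          exact_mod_cast F_half n hn s
        linarith
    · rintro τ ⟨i, j, -, rfl | rfl | rfl | rfl⟩ <;>
        simp only [inn_add, inn_sub, inn_neg, inn_e] <;>
        linarith [(hb i).1, (hb i).2, (hb j).1, (hb j).2]

theorem statement0 :
    {α ∈ M | (∀ τ ∈ S, -1 ≤ inn τ α) ∧ ∀ τ ∈ R, -2 ≤ inn τ α} = insert 0 D4 ∧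
    Set.ncard {α ∈ M | (∀ τ ∈ S, -1 ≤ inn τ α) ∧ ∀ τ ∈ R, -2 ≤ inn τ α} = 25 := by
  rw [set_eq]
  refine ⟨D4_eq.symm, ?_⟩
  rw [Set.ncard_image_of_injective _ c_inj, Set.ncard_coe_finset, F_card]

end Stmt0
end
end

section
/- The subspace U ∩ 𝔪³ of the polynomial ring ℂ[λ,μ,ν,ρ], consisting of those ℂ-linear combinations of the 25 monomials λμνρ²·f_α (α ∈ D₄ ∪ {0}) that vanish to order at least 3 at the point e = (1,1,1,1) (i.e., lie in the cube of the maximal ideal of e), has dimension exactly 10 over ℂ. -/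
/-!
Statement 1: The subspace `U ∩ 𝔪³` of `ℂ[λ,μ,ν,ρ]`, consisting of linear
combinations of the 25 monomials `λμνρ²·f_α` (α ∈ D₄ ∪ {0}) vanishing to
order ≥ 3 at `e = (1,1,1,1)`, has dimension exactly 10 over ℂ.
-/

noncomputable section

namespace Stmt1

open MvPolynomial

/-- The polynomial ring `ℂ[λ,μ,ν,ρ]` with `λ = X 0`, `μ = X 1`, `ν = X 2`, `ρ = X 3`. -/
abbrev P4 : Type := MvPolynomial (Fin 4) ℂ

/-- `α` is a root of `D₄`, i.e. of the form `±e_i ± e_j` with `i < j`. -/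
def IsD4Root (α : Fin 4 → ℤ) : Prop :=
  ∃ i j : Fin 4, i < j ∧
    (α = Pi.single i 1 + Pi.single j 1 ∨ α = Pi.single i 1 - Pi.single j 1 ∨
     α = -Pi.single i 1 + Pi.single j 1 ∨ α = -Pi.single i 1 - Pi.single j 1)

/-- The lattice vector `α = a(e₁−e₂) + b(e₃+e₄) + c(e₃−e₄) + d(e₂−e₃)`. -/
def toRoot (a b c d : ℤ) : Fin 4 → ℤ := ![a, -a + d, b + c - d, b - c]

/-- The monomial `λμνρ² · f_α = λ^(a+1) μ^(b+1) ν^(c+1) ρ^(d+2)` where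
`f_α = λᵃμᵇνᶜρᵈ` for `α = a(e₁−e₂) + b(e₃+e₄) + c(e₃−e₄) + d(e₂−e₃)`. -/
def mono (a b c d : ℤ) : P4 :=
  X 0 ^ (a + 1).toNat * X 1 ^ (b + 1).toNat * X 2 ^ (c + 1).toNat * X 3 ^ (d + 2).toNat

/-- `U`: the ℂ-linear span of the 25 monomials `λμνρ²·f_α`, `α ∈ D₄ ∪ {0}`. -/
def U : Submodule ℂ P4 :=
  Submodule.span ℂ
    {p | ∃ a b c d : ℤ, (toRoot a b c d = 0 ∨ IsD4Root (toRoot a b c d)) ∧ p = mono a b c d}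

/-- The maximal ideal `𝔪` of the point `e = (1,1,1,1)`. -/
def mIdeal : Ideal P4 := Ideal.span {X 0 - 1, X 1 - 1, X 2 - 1, X 3 - 1}

def sT : Fin 25 → Fin 4 → ℕ :=
  ![![1, 1, 1, 2],
  ![2, 2, 2, 4],
  ![2, 1, 1, 2],
  ![0, 1, 1, 2],
  ![0, 0, 0, 0],
  ![2, 2, 2, 3],
  ![2, 1, 1, 3],
  ![0, 1, 1, 1],
  ![0, 0, 0, 1],
  ![2, 2, 1, 3],
  ![2, 1, 2, 3],
  ![0, 1, 0, 1],
  ![0, 0, 1, 1],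
  ![1, 2, 2, 3],
  ![1, 1, 1, 3],
  ![1, 1, 1, 1],
  ![1, 0, 0, 1],
  ![1, 2, 1, 3],
  ![1, 1, 2, 3],
  ![1, 1, 0, 1],
  ![1, 0, 1, 1],
  ![1, 2, 1, 2],
  ![1, 1, 2, 2],
  ![1, 1, 0, 2],
  ![1, 0, 1, 2]]
def eT : Fin 15 → Fin 4 → ℕ :=
  ![![0, 0, 0, 0],
  ![0, 0, 0, 1],
  ![0, 0, 0, 2],
  ![0, 0, 1, 0],
  ![0, 0, 1, 1],
  ![0, 0, 2, 0],
  ![0, 1, 0, 0],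
  ![0, 1, 0, 1],
  ![0, 1, 1, 0],
  ![0, 2, 0, 0],
  ![1, 0, 0, 0],
  ![1, 0, 0, 1],
  ![1, 0, 1, 0],
  ![1, 1, 0, 0],
  ![2, 0, 0, 0]]
def nT : Fin 25 → Fin 15 → ℤ :=
  ![![0, 0, -2, -1, 1, -2, -1, 1, 0, -2, -1, 1, 0, 0, -2],
  ![0, -1, 0, -1, 1, -2, 1, 0, 0, -1, 0, 0, 0, 0, 0],
  ![0, -1, 1, 0, 0, 0, 1, 0, 0, -1, 2, -1, 0, 0, 1],
  ![0, 1, -1, -1, 1, -2, -1, 0, 0, 1, -1, 0, 0, 0, 1],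
  ![1, 0, 0, 0, 0, 0, -1, 0, 0, 1, 0, 0, 0, 0, 0],
  ![0, 1, 0, 0, -1, 0, -1, 0, 1, 0, -1, 0, 1, 0, 0],
  ![0, 1, -1, -1, 0, -1, -1, 0, 1, 1, -1, 1, 0, -1, 0],
  ![0, -1, 1, 2, -1, 1, 1, 0, 0, -1, 0, 0, 0, 0, 0],
  ![0, 0, 0, 0, 0, 0, 0, 0, 0, 0, 0, 0, 0, 0, 0],
  ![0, 0, 0, 1, 0, 2, 0, 0, -1, 0, 0, 0, -1, 1, 0],
  ![0, 0, 0, 1, 0, 1, 0, 0, -1, 1, 0, 0, 0, 0, 0],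
  ![0, 0, 0, -1, 0, 1, 1, 0, 0, -1, 0, 0, 0, 0, 0],
  ![0, 0, 0, 0, 0, 0, 0, 0, 0, 0, 0, 0, 0, 0, 0],
  ![0, 0, 0, 0, 0, 2, 0, 0, 0, 0, 1, 0, -1, 0, 0],
  ![0, 0, 2, 1, -1, 2, 1, -1, 0, 0, 1, -1, 0, 1, 0],
  ![0, 0, 0, 0, 0, 0, 0, 0, 0, 0, 0, 0, 0, 0, 0],
  ![0, 0, 0, 0, 0, 0, 0, 0, 0, 0, 0, 0, 0, 0, 0],
  ![0, 0, 0, 1, -1, 0, -1, 1, 0, 0, 0, 0, 1, -1, 0],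
  ![0, 0, 0, 0, 0, 0, 0, 0, 0, 0, 0, 0, 0, 0, 0],
  ![0, 0, 0, 0, 0, 0, 0, 0, 0, 0, 0, 0, 0, 0, 0],
  ![0, 0, 0, 0, 0, 0, 0, 0, 0, 0, 0, 0, 0, 0, 0],
  ![0, 0, 0, -1, 1, -2, 1, -1, 0, 2, 0, 0, 0, 0, 0],
  ![0, 0, 0, 0, 0, 0, 0, 0, 0, 0, 0, 0, 0, 0, 0],
  ![0, 0, 0, 0, 0, 0, 0, 0, 0, 0, 0, 0, 0, 0, 0],
  ![0, 0, 0, 0, 0, 0, 0, 0, 0, 0, 0, 0, 0, 0, 0]]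

/-- The exponent vector of the `k`-th monomial. -/
def sF (k : Fin 25) : Fin 4 →₀ ℕ := Finsupp.equivFunOnFinite.symm (sT k)

lemma sT_inj : Function.Injective sT := by decide

lemma eT_surj : ∀ y : Fin 4 → Fin 3, (∑ i, (y i : ℕ)) < 3 → ∃ j, ∀ i, eT j i = (y i : ℕ) := by
  decide +kernel

lemma eT_deg : ∀ j, (∑ i, eT j i) < 3 := by decide

/-- The jet matrix. -/
def mT (j : Fin 15) (k : Fin 25) : ℕ := ∏ i, (sT k i).choose (eT j i)

lemma mT_nT : ∀ j j' : Fin 15, (∑ k, (mT j k : ℤ) * nT k j') = if j = j' then 1 else 0 := by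
  decide +kernel

/-- The shift. -/
def sh : P4 ≃ₐ[ℂ] P4 :=
  AlgEquiv.ofAlgHom (aeval fun i => X i + 1) (aeval fun i => X i - 1)
    (by ext i; simp) (by ext i; simp)

lemma sh_X (i : Fin 4) : sh (X i) = X i + 1 := by simp [sh]

lemma map_m : Ideal.map (sh : P4 ≃+* P4) mIdeal = idealOfVars (Fin 4) ℂ := by
  rw [mIdeal, Ideal.map_span, idealOfVars]
  congr 1
  ext p
  simp only [Set.mem_image, Set.mem_range, Set.mem_insert_iff, Set.mem_singleton_iff]
  have h : ∀ i : Fin 4, (sh : P4 ≃+* P4) (X i - 1) = X i := by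
    intro i
    change sh (X i - 1) = X i
    rw [map_sub, sh_X, map_one]; ring
  constructor
  · rintro ⟨q, rfl | rfl | rfl | rfl, rfl⟩
    exacts [⟨0, (h 0).symm⟩, ⟨1, (h 1).symm⟩, ⟨2, (h 2).symm⟩, ⟨3, (h 3).symm⟩]
  · rintro ⟨i, rfl⟩
    refine ⟨X i - 1, ?_, h i⟩
    fin_cases i <;> simp

lemma mem_m3 (p : P4) : p ∈ mIdeal ^ 3 ↔ sh p ∈ idealOfVars (Fin 4) ℂ ^ 3 := by
  rw [← map_m, ← Ideal.map_pow, Ideal.mem_map_of_equiv]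
  constructor
  · intro h
    exact ⟨p, h, rfl⟩
  · rintro ⟨q, hq, h⟩
    have : q = p := sh.injective h
    exact this ▸ hq

lemma coeff_prod (s x : Fin 4 → ℕ) :
    coeff (Finsupp.equivFunOnFinite.symm x) (∏ i, ((X i : P4) + 1) ^ s i)
      = ((∏ i, (s i).choose (x i) : ℕ) : ℂ) := by
  have h : ∀ i : Fin 4, ((X i : P4) + 1) ^ s i
      = ∑ m ∈ Finset.range (s i + 1), monomial (Finsupp.single i m) (((s i).choose m : ℕ) : ℂ) := by
    intro i
    rw [add_pow]
    refine Finset.sum_congr rfl fun m _ => ?_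
    rw [one_pow, mul_one, ← mul_one (((s i).choose m : ℕ) : ℂ), mul_comm, ← C_mul_monomial,
      ← X_pow_eq_monomial, map_natCast]
  simp_rw [h]
  rw [Finset.prod_univ_sum, coeff_sum]
  have h2 : ∀ p : Fin 4 → ℕ, ∏ i, monomial (Finsupp.single i (p i)) (((s i).choose (p i) : ℕ) : ℂ)
      = (monomial (Finsupp.equivFunOnFinite.symm p) ((∏ i, (s i).choose (p i) : ℕ) : ℂ) : P4) := by
    intro p
    have : (Finsupp.equivFunOnFinite.symm p : Fin 4 →₀ ℕ) = ∑ i, Finsupp.single i (p i) := by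
      ext i; simp [Finsupp.finsetSum_apply, Finsupp.single_apply]
    rw [this, monomial_sum_index, Nat.cast_prod, map_prod, ← Finset.prod_mul_distrib]
    exact Finset.prod_congr rfl fun i _ => by rw [C_mul_monomial, mul_one]
  simp_rw [h2, coeff_monomial, EmbeddingLike.apply_eq_iff_eq]
  rw [Finset.sum_ite_eq']
  split_ifs with hx
  · rfl
  · rw [Fintype.mem_piFinset] at hx
    push Not at hx
    obtain ⟨i, hi⟩ := hx
    rw [Finset.prod_eq_zero (Finset.mem_univ i), Nat.cast_zero]
    apply Nat.choose_eq_zero_of_lt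
    simpa using hi

lemma sh_mono (k : Fin 25) : sh (monomial (sF k) 1) = ∏ i, ((X i : P4) + 1) ^ sT k i := by
  rw [monomial_eq, Finsupp.prod_fintype _ _ (by simp)]
  simp [sh_X, sF, map_prod]

/-- The parametrisation of `U`. -/
def par : (Fin 25 → ℂ) →ₗ[ℂ] P4 := Fintype.linearCombination ℂ (fun k => monomial (sF k) (1 : ℂ))

lemma par_inj : Function.Injective par := by
  have h : LinearIndependent ℂ (fun k => (monomial (sF k) (1 : ℂ) : P4)) := by
    have := (basisMonomials (Fin 4) ℂ).linearIndependent.comp sF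
      (Finsupp.equivFunOnFinite.symm.injective.comp sT_inj)
    simpa [Function.comp_def] using this
  exact linearIndependent_iff_injective_fintypeLinearCombination.mp h

lemma mono_eq (a b c d : ℤ) (k : Fin 25) (h0 : (a + 1).toNat = sT k 0) (h1 : (b + 1).toNat = sT k 1)
    (h2 : (c + 1).toNat = sT k 2) (h3 : (d + 2).toNat = sT k 3) :
    mono a b c d = monomial (sF k) 1 := by
  rw [monomial_eq, Finsupp.prod_fintype _ _ (by simp), mono, h0, h1, h2, h3]
  simp [sF, Fin.prod_univ_four]

lemma root_cases (a b c d : ℤ) (h : toRoot a b c d = 0 ∨ IsD4Root (toRoot a b c d)) :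
    ∃ k : Fin 25, a + 1 = sT k 0 ∧ b + 1 = sT k 1 ∧ c + 1 = sT k 2 ∧ d + 2 = sT k 3 := by
  have key : ∀ v : Fin 4 → ℤ, toRoot a b c d = v →
      a = v 0 ∧ d = v 0 + v 1 ∧ 2 * b = v 0 + v 1 + v 2 + v 3 ∧ 2 * c = v 0 + v 1 + v 2 - v 3 := by
    rintro v rfl
    simp [toRoot]
    constructor <;> ring
  have fin : ∀ v : Fin 4 → ℤ, (∃ k : Fin 25, v 0 + 1 = sT k 0 ∧
      v 0 + v 1 + v 2 + v 3 + 2 = 2 * sT k 1 ∧ v 0 + v 1 + v 2 - v 3 + 2 = 2 * sT k 2 ∧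
      v 0 + v 1 + 2 = sT k 3) → toRoot a b c d = v →
      ∃ k : Fin 25, a + 1 = sT k 0 ∧ b + 1 = sT k 1 ∧ c + 1 = sT k 2 ∧ d + 2 = sT k 3 := by
    rintro v ⟨k, h0, h1, h2, h3⟩ hv
    obtain ⟨g0, g1, g2, g3⟩ := key v hv
    exact ⟨k, by omega, by omega, by omega, by omega⟩
  rcases h with h | ⟨i, j, hij, h⟩
  · exact fin _ (by decide) h
  · revert hij
    rcases h with h | h | h | h
    all_goals
      refine fun hij => fin _ ?_ h
      clear h fin key
      revert i j
      decide +kernel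

lemma root_exists (k : Fin 25) : ∃ a b c d : ℤ, (toRoot a b c d = 0 ∨ IsD4Root (toRoot a b c d)) ∧
    monomial (sF k) 1 = mono a b c d := by
  refine ⟨sT k 0 - 1, sT k 1 - 1, sT k 2 - 1, sT k 3 - 2, ?_,
    (mono_eq _ _ _ _ k (by simp) (by simp) (by simp) (by simp)).symm⟩
  unfold IsD4Root
  revert k
  decide +kernel

lemma U_eq : U = LinearMap.range par := by
  rw [par, Fintype.range_linearCombination, U]
  congr 1
  ext p
  constructor
  · rintro ⟨a, b, c, d, h, rfl⟩
    obtain ⟨k, h0, h1, h2, h3⟩ := root_cases a b c d h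
    exact ⟨k, (mono_eq a b c d k (by omega) (by omega) (by omega) (by omega)).symm⟩
  · rintro ⟨k, rfl⟩
    exact root_exists k

/-- The jet matrix over `ℂ`. -/
def mC : Matrix (Fin 15) (Fin 25) ℂ := fun j k => (mT j k : ℂ)

lemma coeff_par (v : Fin 25 → ℂ) (j : Fin 15) :
    coeff (Finsupp.equivFunOnFinite.symm (eT j)) (sh (par v)) = mC.mulVecLin v j := by
  rw [par, Fintype.linearCombination_apply, map_sum, coeff_sum, Matrix.mulVecLin_apply,
    Matrix.mulVec, dotProduct]
  refine Finset.sum_congr rfl fun k _ => ?_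
  rw [map_smul, coeff_smul, sh_mono, coeff_prod, smul_eq_mul, mul_comm]
  rfl

lemma par_mem (v : Fin 25 → ℂ) : par v ∈ mIdeal ^ 3 ↔ mC.mulVecLin v = 0 := by
  rw [mem_m3, mem_pow_idealOfVars_iff']
  constructor
  · intro h
    ext j
    rw [← coeff_par]
    apply h
    rw [Finsupp.degree_eq_sum]
    exact eT_deg j
  · intro h x hx
    rw [Finsupp.degree_eq_sum] at hx
    have hb : ∀ i, x i < 3 := fun i =>
      lt_of_le_of_lt (Finset.single_le_sum (f := fun i => x i) (fun _ _ => Nat.zero_le _)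
        (Finset.mem_univ i)) hx
    obtain ⟨j, hj⟩ := eT_surj (fun i => ⟨x i, hb i⟩) hx
    have : x = Finsupp.equivFunOnFinite.symm (eT j) := by
      ext i; simp [hj]
    rw [this, coeff_par, h]; rfl

lemma mC_surj : Function.Surjective mC.mulVecLin := by
  intro w
  let N : Matrix (Fin 25) (Fin 15) ℂ := fun k j => (nT k j : ℂ)
  have h : mC * N = 1 := by
    ext j j'
    rw [Matrix.mul_apply, Matrix.one_apply]
    have := congrArg (Int.cast : ℤ → ℂ) (mT_nT j j')
    push_cast at this
    exact this
  refine ⟨N.mulVec w, ?_⟩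
  rw [Matrix.mulVecLin_apply, Matrix.mulVec_mulVec, h, Matrix.one_mulVec]

theorem statement1 :
    Module.finrank ℂ ↥(U ⊓ Submodule.restrictScalars ℂ (mIdeal ^ 3)) = 10 := by
  have h : U ⊓ Submodule.restrictScalars ℂ (mIdeal ^ 3)
      = Submodule.map par (LinearMap.ker mC.mulVecLin) := by
    ext p
    rw [U_eq, Submodule.mem_inf, Submodule.restrictScalars_mem, Submodule.mem_map]
    constructor
    · rintro ⟨⟨v, rfl⟩, hv⟩
      exact ⟨v, (par_mem v).mp hv, rfl⟩
    · rintro ⟨v, hv, rfl⟩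
      exact ⟨⟨v, rfl⟩, (par_mem v).mpr hv⟩
  rw [h, ← (Submodule.equivMapOfInjective par par_inj _).finrank_eq]
  have := LinearMap.finrank_range_add_finrank_ker mC.mulVecLin
  rw [LinearMap.range_eq_top.mpr mC_surj, finrank_top] at this
  simp at this
  omega

end Stmt1
end
end

section
/- The ten polynomials f₁, g₁, f₂, g₂, f₃, g₃, f₄, g₄, f₅, g₅ all lie in U ∩ 𝔪³ (each is a ℂ-linear combination of the 25 monomials λμνρ²·f_α with α ∈ D₄ ∪ {0}, and each vanishes to order at least 3 at e = (1,1,1,1)), and they are linearly independent over ℂ; hence they form a basis of the 10-dimensional space U ∩ 𝔪³. -/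
/-!
Statement 2: The ten polynomials f₁, g₁, …, f₅, g₅ all lie in `U ∩ 𝔪³`, and
they are linearly independent over ℂ; hence they form a basis of the
10-dimensional space `U ∩ 𝔪³`.
-/

noncomputable section

namespace Stmt2

open MvPolynomial

/-- The polynomial ring `ℂ[λ,μ,ν,ρ]`. -/
abbrev P4 : Type := MvPolynomial (Fin 4) ℂ

/-- `λ`. -/ def l : P4 := X 0
/-- `μ`. -/ def m : P4 := X 1
/-- `ν`. -/ def n : P4 := X 2
/-- `ρ`. -/ def r : P4 := X 3

/-- `α` is a root of `D₄`, i.e. of the form `±e_i ± e_j` with `i < j`. -/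
def IsD4Root (α : Fin 4 → ℤ) : Prop :=
  ∃ i j : Fin 4, i < j ∧
    (α = Pi.single i 1 + Pi.single j 1 ∨ α = Pi.single i 1 - Pi.single j 1 ∨
     α = -Pi.single i 1 + Pi.single j 1 ∨ α = -Pi.single i 1 - Pi.single j 1)

/-- The lattice vector `α = a(e₁−e₂) + b(e₃+e₄) + c(e₃−e₄) + d(e₂−e₃)`. -/
def toRoot (a b c d : ℤ) : Fin 4 → ℤ := ![a, -a + d, b + c - d, b - c]

/-- The monomial `λμνρ² · f_α` where `f_α = λᵃμᵇνᶜρᵈ`. -/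
def mono (a b c d : ℤ) : P4 :=
  X 0 ^ (a + 1).toNat * X 1 ^ (b + 1).toNat * X 2 ^ (c + 1).toNat * X 3 ^ (d + 2).toNat

/-- `U`: the ℂ-linear span of the 25 monomials `λμνρ²·f_α`, `α ∈ D₄ ∪ {0}`. -/
def U : Submodule ℂ P4 :=
  Submodule.span ℂ
    {p | ∃ a b c d : ℤ, (toRoot a b c d = 0 ∨ IsD4Root (toRoot a b c d)) ∧ p = mono a b c d}

/-- The maximal ideal `𝔪` of the point `e = (1,1,1,1)`. -/
def mIdeal : Ideal P4 := Ideal.span {X 0 - 1, X 1 - 1, X 2 - 1, X 3 - 1}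

def f1 : P4 := (l * r - 1) * (m * r - 1) * (n * r - 1) * (l * m * n * r - 1)
def g1 : P4 := (r - 1) * (l * m * r - 1) * (l * n * r - 1) * (m * n * r - 1)
def f2 : P4 := (m * r - 1) * (n * r - 1) * (1 - l ^ 2 * m * n * r ^ 2)
def g2 : P4 := (r - 1) * (m * n * r - 1) * (1 - l ^ 2 * m * n * r ^ 2)
def f3 : P4 := (l * r - 1) * (m * r - 1) * (1 - l * m * n ^ 2 * r ^ 2)
def g3 : P4 := (r - 1) * (l * m * r - 1) * (1 - l * m * n ^ 2 * r ^ 2)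
def f4 : P4 := r * (m * r - 1) *
  (l + n - l * n - l * n * r - l * m * n * r + l ^ 2 * m * n ^ 2 * r ^ 2)
def g4 : P4 := r * (m - 1) *
  (l + n - l * n - l * n * r - l * m * n * r + l ^ 2 * m * n ^ 2 * r ^ 2)
def f5 : P4 := (l * m * r - 1) * (m * n * r - 1) * (1 - l * n * r ^ 2)
def g5 : P4 := (m * r - 1) * (l * m * n * r - 1) * (1 - l * n * r ^ 2)

/-- The ten polynomials of the table. -/
def funcs : Fin 10 → P4 := ![f1, g1, f2, g2, f3, g3, f4, g4, f5, g5]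

def ex : Fin 25 → Fin 4 → ℕ := ![
  ![2, 2, 2, 4],
  ![2, 1, 1, 2],
  ![0, 1, 1, 2],
  ![0, 0, 0, 0],
  ![2, 2, 2, 3],
  ![2, 1, 1, 3],
  ![0, 1, 1, 1],
  ![0, 0, 0, 1],
  ![2, 2, 1, 3],
  ![2, 1, 2, 3],
  ![0, 1, 0, 1],
  ![0, 0, 1, 1],
  ![1, 2, 2, 3],
  ![1, 1, 1, 3],
  ![1, 1, 1, 1],
  ![1, 0, 0, 1],
  ![1, 2, 1, 3],
  ![1, 1, 2, 3],
  ![1, 1, 0, 1],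
  ![1, 0, 1, 1],
  ![1, 2, 1, 2],
  ![1, 1, 2, 2],
  ![1, 1, 0, 2],
  ![1, 0, 1, 2],
  ![1, 1, 1, 2]]

def Fm : Fin 10 → Fin 25 → ℤ := ![
  ![1, 1, 1, 1, 0, 0, 0, 0, -1, -1, -1, -1, -1, -1, -1, -1, 0, 0, 0, 0, 1, 1, 1, 1, 0],
  ![1, 1, 1, 1, -1, -1, -1, -1, 0, 0, 0, 0, 0, 0, 0, 0, -1, -1, -1, -1, 1, 1, 1, 1, 0],
  ![-1, -1, 1, 1, 0, 0, 0, 0, 1, 1, -1, -1, 0, 0, 0, 0, 0, 0, 0, 0, 0, 0, 0, 0, 0],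
  ![-1, -1, 1, 1, 1, 1, -1, -1, 0, 0, 0, 0, 0, 0, 0, 0, 0, 0, 0, 0, 0, 0, 0, 0, 0],
  ![-1, 0, 0, 1, 0, 0, 0, 0, 0, 1, -1, 0, 1, 0, 0, -1, 0, 0, 0, 0, 0, -1, 1, 0, 0],
  ![-1, 0, 0, 1, 1, 0, 0, -1, 0, 0, 0, 0, 0, 0, 0, 0, 0, 1, -1, 0, 0, -1, 1, 0, 0],
  ![1, 0, 1, 0, 0, 0, 0, 0, 0, -1, 0, -1, 0, -1, 0, -1, -1, 0, 0, 1, 0, 0, 1, 1, 0],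
  ![0, 0, 0, 0, 1, 0, 1, 0, 0, -1, 0, -1, 0, 0, -1, -1, 0, 0, 1, 1, -1, 0, 0, 1, 0],
  ![-1, 0, 0, 1, 0, 1, -1, 0, 0, 0, 0, 0, 0, 0, 0, 0, 0, 1, -1, 0, 1, 0, 0, -1, 0],
  ![-1, 0, 0, 1, 0, 0, 0, 0, 0, 1, -1, 0, 0, 1, -1, 0, 0, 0, 0, 0, 1, 0, 0, -1, 0]]

def MM (i : Fin 25) : P4 := X 0 ^ ex i 0 * X 1 ^ ex i 1 * X 2 ^ ex i 2 * X 3 ^ ex i 3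

set_option linter.unusedSimpArgs false

lemma MM_eq (i : Fin 25) : MM i = monomial (Finsupp.equivFunOnFinite.symm (ex i)) (1 : ℂ) := by
  rw [MvPolynomial.monomial_eq, Finsupp.prod_fintype _ _ (by simp)]
  simp [MM, Fin.prod_univ_four]

lemma ex_inj : Function.Injective ex := by decide

lemma MM_li : LinearIndependent ℂ MM := by
  have h := (MvPolynomial.basisMonomials (Fin 4) ℂ).linearIndependent.comp
    (fun i : Fin 25 => Finsupp.equivFunOnFinite.symm (ex i))
    (Finsupp.equivFunOnFinite.symm.injective.comp ex_inj)
  have e : MM = (MvPolynomial.basisMonomials (Fin 4) ℂ) ∘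
      (fun i : Fin 25 => Finsupp.equivFunOnFinite.symm (ex i)) := by
    funext i
    simp [MM_eq]
  rw [e]
  exact h

lemma U_gens : {p | ∃ a b c d : ℤ, (toRoot a b c d = 0 ∨ IsD4Root (toRoot a b c d)) ∧
    p = mono a b c d} = Set.range MM := by
  ext p
  constructor
  · rintro ⟨a, b, c, d, h, rfl⟩
    suffices H : ∃ i : Fin 25, a + 1 = ex i 0 ∧ b + 1 = ex i 1 ∧ c + 1 = ex i 2 ∧ d + 2 = ex i 3 by
      obtain ⟨i, h0, h1, h2, h3⟩ := H
      exact ⟨i, by simp [mono, MM, h0, h1, h2, h3]⟩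
    have key : ∀ i : Fin 25, toRoot a b c d = toRoot (ex i 0 - 1) (ex i 1 - 1) (ex i 2 - 1) (ex i 3 - 2) →
        a + 1 = ex i 0 ∧ b + 1 = ex i 1 ∧ c + 1 = ex i 2 ∧ d + 2 = ex i 3 := by
      intro i hi
      have e0 := congrFun hi 0
      have e1 := congrFun hi 1
      have e2 := congrFun hi 2
      have e3 := congrFun hi 3
      simp [toRoot] at e0 e1 e2 e3
      omega
    suffices H : ∃ i : Fin 25, toRoot a b c d = toRoot (ex i 0 - 1) (ex i 1 - 1) (ex i 2 - 1) (ex i 3 - 2) by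
      obtain ⟨i, hi⟩ := H
      exact ⟨i, key i hi⟩
    clear key
    generalize toRoot a b c d = v at h
    rcases h with rfl | ⟨i, j, hij, h⟩
    · decide
    · revert i j
      intro i j hij h
      rcases h with rfl | rfl | rfl | rfl <;> revert i j <;> decide
  · rintro ⟨i, rfl⟩
    refine ⟨ex i 0 - 1, ex i 1 - 1, ex i 2 - 1, ex i 3 - 2, ?_, ?_⟩
    · revert i
      unfold IsD4Root
      decide
    · simp [mono, MM]

lemma funcs_eq (k : Fin 10) : funcs k = ∑ i, (Fm k i : ℂ) • MM i := by
  fin_cases k <;>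
  · simp [funcs, Fm, MM, ex, Fin.sum_univ_succ, f1, g1, f2, g2, f3, g3, f4, g4, f5, g5, l, m, n, r]
    ring

lemma comb_eq (g : Fin 10 → ℂ) : ∑ k, g k • funcs k = ∑ i, (∑ k, g k * (Fm k i : ℂ)) • MM i := by
  simp_rw [funcs_eq, Finset.smul_sum, Finset.sum_smul, smul_smul]
  exact Finset.sum_comm

lemma mem_m_iff (p : P4) (hp : p ∈ mIdeal) : eval (fun _ => (1 : ℂ)) p = 0 := by
  have : mIdeal ≤ RingHom.ker (eval (fun _ : Fin 4 => (1 : ℂ))) := by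
    rw [mIdeal, Ideal.span_le]
    rintro x hx
    simp only [Set.mem_insert_iff, Set.mem_singleton_iff] at hx
    rcases hx with rfl | rfl | rfl | rfl <;> simp
  exact this hp

lemma pderiv_mem (i : Fin 4) (k : ℕ) : ∀ p ∈ mIdeal ^ (k + 1), pderiv i p ∈ mIdeal ^ k := by
  induction k with
  | zero => simp
  | succ k ih =>
    intro p hp
    rw [pow_succ] at hp
    refine Submodule.mul_induction_on hp ?_ ?_
    · intro a ha b hb
      rw [Derivation.leibniz, smul_eq_mul, smul_eq_mul]
      refine Ideal.add_mem _ (Ideal.mul_mem_right _ _ ha) ?_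
      rw [pow_succ']
      exact Ideal.mul_mem_mul hb (ih a ha)
    · intro x y hx hy
      rw [map_add]
      exact Ideal.add_mem _ hx hy

/-- Euler operator. -/
def eu (i : Fin 4) : P4 →ₗ[ℂ] P4 := (LinearMap.mulLeft ℂ (X i)).comp (pderiv i).toLinearMap

lemma eu_mem (i : Fin 4) (k : ℕ) (p : P4) (hp : p ∈ mIdeal ^ (k + 1)) : eu i p ∈ mIdeal ^ k :=
  Ideal.mul_mem_left _ _ (pderiv_mem i k p hp)

lemma eu_MM (i : Fin 4) (j : Fin 25) : eu i (MM j) = (ex j i : ℂ) • MM j := by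
  have h := X_mul_pderiv_monomial (R := ℂ) (i := i) (m := Finsupp.equivFunOnFinite.symm (ex j)) (r := 1)
  rw [← MM_eq] at h
  refine Eq.trans h ?_
  simp [Nat.cast_smul_eq_nsmul]

lemma ev_MM (j : Fin 25) : eval (fun _ => (1 : ℂ)) (MM j) = 1 := by simp [MM]

lemma jets (c : Fin 25 → ℂ) (h : ∑ i, c i • MM i ∈ mIdeal ^ 3) :
    (∑ i, c i = 0) ∧ (∀ a, ∑ i, c i * (ex i a : ℂ) = 0) ∧
    (∀ a b, ∑ i, c i * (ex i a : ℂ) * (ex i b : ℂ) = 0) := by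
  have h2 : ∀ k, ∀ p ∈ mIdeal ^ (k + 1), eval (fun _ => (1 : ℂ)) p = 0 := fun k p hp =>
    mem_m_iff p (Ideal.pow_le_self (by simp) hp)
  refine ⟨?_, fun a => ?_, fun a b => ?_⟩
  · simpa [smul_eval, ev_MM] using h2 _ _ h
  · simpa [smul_eval, ev_MM, eu_MM, map_sum] using h2 _ _ (eu_mem a 2 _ h)
  · simpa [smul_eval, ev_MM, eu_MM, map_sum, mul_assoc, mul_comm, mul_left_comm] using h2 _ _ (eu_mem b 1 _ (eu_mem a 2 _ h))

lemma li_aux (g : Fin 10 → ℂ) (h : ∀ i, ∑ k, g k * (Fm k i : ℂ) = 0) : ∀ k, g k = 0 := by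
  have h1 := h 1
  have h7 := h 7
  have h8 := h 8
  have h12 := h 12
  have h16 := h 16
  have h17 := h 17
  have h19 := h 19
  have h20 := h 20
  have h21 := h 21
  have h22 := h 22
  simp [Fm, Fin.sum_univ_succ] at h1 h7 h8 h12 h16 h17 h19 h20 h21 h22
  intro k
  fin_cases k
  · show g 0 = 0
    linear_combination -(1/6) * h1 + (1/6) * h7 - (1/6) * h8 - (1/6) * h12 + (1/2) * h16 + (1/3) * h21 + (1/2) * h22
  · show g 1 = 0
    linear_combination (1/3) * h1 - (1/3) * h7 + (1/3) * h8 + (1/3) * h12 + (1/3) * h21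
  · show g 2 = 0
    linear_combination -(1/6) * h1 + (1/6) * h7 + (5/6) * h8 - (1/6) * h12 + (1/2) * h16 + (1/3) * h21 + (1/2) * h22
  · show g 3 = 0
    linear_combination -(2/3) * h1 - (1/3) * h7 - (2/3) * h8 + (1/3) * h12 + (1/3) * h21
  · show g 4 = 0
    linear_combination -(1/6) * h1 + (1/6) * h7 - (1/6) * h8 + (5/6) * h12 + (1/2) * h16 + (1/3) * h21 + (1/2) * h22
  · show g 5 = 0
    linear_combination (1/3) * h1 - (1/3) * h7 + (1/3) * h8 - (2/3) * h12 - (2/3) * h21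
  · show g 6 = 0
    linear_combination -(1/3) * h1 + (1/3) * h7 - (1/3) * h8 - (1/3) * h12 - h16 - (1/3) * h21
  · show g 7 = 0
    linear_combination (2/3) * h1 - (2/3) * h7 + (2/3) * h8 + (2/3) * h12 + h16 + h19 + (2/3) * h21
  · show g 8 = 0
    linear_combination h12 + h17 + h21
  · show g 9 = 0
    linear_combination (1/2) * h1 - (1/2) * h7 + (1/2) * h8 - (1/2) * h12 + (1/2) * h16 - h17 + h19 + h20 - h21 - (1/2) * h22

set_option maxHeartbeats 4000000 in
lemma span_aux (c : Fin 25 → ℂ) (h0 : ∑ i, c i = 0) (h1 : ∀ a, ∑ i, c i * (ex i a : ℂ) = 0)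
    (h2 : ∀ a b, ∑ i, c i * (ex i a : ℂ) * (ex i b : ℂ) = 0) :
    ∃ d : Fin 10 → ℂ, ∀ i, ∑ k, d k * (Fm k i : ℂ) = c i := by
  have j0 := h1 0
  have j1 := h1 1
  have j2 := h1 2
  have j3 := h1 3
  have j00 := h2 0 0
  have j01 := h2 0 1
  have j02 := h2 0 2
  have j03 := h2 0 3
  have j11 := h2 1 1
  have j12 := h2 1 2
  have j13 := h2 1 3
  have j22 := h2 2 2
  have j23 := h2 2 3
  have j33 := h2 3 3
  simp [ex, Fin.sum_univ_succ] at h0 j0 j1 j2 j3 j00 j01 j02 j03 j11 j12 j13 j22 j23 j33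
  refine ⟨![-(1/6) * c 1 + (1/6) * c 7 - (1/6) * c 8 - (1/6) * c 12 + (1/2) * c 16 + (1/3) * c 21 + (1/2) * c 22,
    (1/3) * c 1 - (1/3) * c 7 + (1/3) * c 8 + (1/3) * c 12 + (1/3) * c 21,
    -(1/6) * c 1 + (1/6) * c 7 + (5/6) * c 8 - (1/6) * c 12 + (1/2) * c 16 + (1/3) * c 21 + (1/2) * c 22,
    -(2/3) * c 1 - (1/3) * c 7 - (2/3) * c 8 + (1/3) * c 12 + (1/3) * c 21,
    -(1/6) * c 1 + (1/6) * c 7 - (1/6) * c 8 + (5/6) * c 12 + (1/2) * c 16 + (1/3) * c 21 + (1/2) * c 22,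
    (1/3) * c 1 - (1/3) * c 7 + (1/3) * c 8 - (2/3) * c 12 - (2/3) * c 21,
    -(1/3) * c 1 + (1/3) * c 7 - (1/3) * c 8 - (1/3) * c 12 - c 16 - (1/3) * c 21,
    (2/3) * c 1 - (2/3) * c 7 + (2/3) * c 8 + (2/3) * c 12 + c 16 + c 19 + (2/3) * c 21,
    c 12 + c 17 + c 21,
    (1/2) * c 1 - (1/2) * c 7 + (1/2) * c 8 - (1/2) * c 12 + (1/2) * c 16 - c 17 + c 19 + c 20 - c 21 - (1/2) * c 22], fun i => ?_⟩
  fin_cases i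
  · simp [Fm, Fin.sum_univ_succ]
    linear_combination -j0 + (1/2) * j1 - j2 + j3 + j01 - (1/2) * j11 + j12 - j13
  · simp [Fm, Fin.sum_univ_succ]
    ring
  · simp [Fm, Fin.sum_univ_succ]
    linear_combination -j00 + j03 + j22 - j23
  · simp [Fm, Fin.sum_univ_succ]
    linear_combination -h0 + j0 - (1/2) * j1 + j2 - j01 + (1/2) * j11 - j12 + j13 + j22 - j23
  · simp [Fm, Fin.sum_univ_succ]
    linear_combination j0 + j2 - j3 - j01 - j12 + j13
  · simp [Fm, Fin.sum_univ_succ]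
    linear_combination (1/2) * j0 - (1/2) * j2 - (1/2) * j00 + (1/2) * j22
  · simp [Fm, Fin.sum_univ_succ]
    linear_combination (1/2) * j0 - j1 + (1/2) * j2 + (1/2) * j00 + j02 - j03 - j12 + j13 - (1/2) * j22
  · simp [Fm, Fin.sum_univ_succ]
    ring
  · simp [Fm, Fin.sum_univ_succ]
    ring
  · simp [Fm, Fin.sum_univ_succ]
    linear_combination -(1/2) * j1 + (1/2) * j2 + (1/2) * j11 - (1/2) * j22
  · simp [Fm, Fin.sum_univ_succ]
    linear_combination (1/2) * j1 - (1/2) * j2 + j01 - j02 - (1/2) * j11 + j12 - j13 - (1/2) * j22 + j23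
  · simp [Fm, Fin.sum_univ_succ]
    linear_combination j1 - j2 + j12 - j13 - j22 + j23
  · simp [Fm, Fin.sum_univ_succ]
    ring
  · simp [Fm, Fin.sum_univ_succ]
    linear_combination (1/2) * j0 - (1/2) * j1 + j2 - (1/2) * j3 + (1/2) * j00 - j01 + (1/2) * j11 - j12 + j13 - j22 + j23 - (1/2) * j33
  · simp [Fm, Fin.sum_univ_succ]
    linear_combination -(3/2) * j0 + (1/2) * j1 - 2 * j2 + (3/2) * j3 - (1/2) * j00 + j01 - j02 + j03 - (1/2) * j11 + j12 - j13 + j23 - (1/2) * j33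
  · simp [Fm, Fin.sum_univ_succ]
    linear_combination -j0 + j1 + j01 - j13 - j22 + j23
  · simp [Fm, Fin.sum_univ_succ]
    ring
  · simp [Fm, Fin.sum_univ_succ]
    ring
  · simp [Fm, Fin.sum_univ_succ]
    linear_combination -j1 + j2 - j01 + j02 + j13 - j23
  · simp [Fm, Fin.sum_univ_succ]
    ring
  · simp [Fm, Fin.sum_univ_succ]
    ring
  · simp [Fm, Fin.sum_univ_succ]
    ring
  · simp [Fm, Fin.sum_univ_succ]
    ring
  · simp [Fm, Fin.sum_univ_succ]
    linear_combination -j11 + j13 + j22 - j23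
  · simp [Fm, Fin.sum_univ_succ]
    linear_combination -j3 + j00 - j03 + j11 - j13 + j22 - j23 + j33

lemma gen_mem (i : Fin 4) : (X i - 1 : P4) ∈ mIdeal := by
  apply Ideal.subset_span
  fin_cases i <;> simp

lemma mul3 {a b c : P4} (ha : a ∈ mIdeal) (hb : b ∈ mIdeal) (hc : c ∈ mIdeal) :
    a * b * c ∈ mIdeal ^ 3 := by
  rw [pow_succ, pow_two]
  exact Ideal.mul_mem_mul (Ideal.mul_mem_mul ha hb) hc

lemma mem_of_eval (p : P4) (h : eval (fun _ => (1 : ℂ)) p = 0) : p ∈ mIdeal := by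
  have key : ∀ q : P4, q - C (eval (fun _ => (1 : ℂ)) q) ∈ mIdeal := by
    intro q
    induction q using MvPolynomial.induction_on with
    | C a => simp
    | add p q hp hq =>
      have := Ideal.add_mem _ hp hq
      convert this using 1
      simp only [map_add]
      ring
    | mul_X p i hp =>
      have := Ideal.add_mem _ hp (Ideal.mul_mem_left _ p (gen_mem i))
      convert this using 1
      simp
      ring
  simpa [h] using key p

lemma q_mem : (l + n - l * n - l * n * r - l * m * n * r + l ^ 2 * m * n ^ 2 * r ^ 2 : P4) ∈ mIdeal ^ 2 := by
  have h : (l + n - l * n - l * n * r - l * m * n * r + l ^ 2 * m * n ^ 2 * r ^ 2 : P4) =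
    (l * n * r - 1) * (l * m * n * r - 1) - (l - 1) * (n - 1) := by ring
  rw [h, pow_two]
  refine Ideal.sub_mem _ (Ideal.mul_mem_mul ?_ ?_) (Ideal.mul_mem_mul ?_ ?_) <;>
    exact mem_of_eval _ (by simp [l, m, n, r])

lemma funcs_m3 (k : Fin 10) : funcs k ∈ mIdeal ^ 3 := by
  fin_cases k
  · exact Ideal.mul_mem_right _ _ (mul3 (mem_of_eval _ (by simp [l, m, n, r])) (mem_of_eval _ (by simp [l, m, n, r])) (mem_of_eval _ (by simp [l, m, n, r])))
  · exact Ideal.mul_mem_right _ _ (mul3 (mem_of_eval _ (by simp [l, m, n, r])) (mem_of_eval _ (by simp [l, m, n, r])) (mem_of_eval _ (by simp [l, m, n, r])))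
  · exact mul3 (mem_of_eval _ (by simp [l, m, n, r])) (mem_of_eval _ (by simp [l, m, n, r])) (mem_of_eval _ (by simp [l, m, n, r]))
  · exact mul3 (mem_of_eval _ (by simp [l, m, n, r])) (mem_of_eval _ (by simp [l, m, n, r])) (mem_of_eval _ (by simp [l, m, n, r]))
  · exact mul3 (mem_of_eval _ (by simp [l, m, n, r])) (mem_of_eval _ (by simp [l, m, n, r])) (mem_of_eval _ (by simp [l, m, n, r]))
  · exact mul3 (mem_of_eval _ (by simp [l, m, n, r])) (mem_of_eval _ (by simp [l, m, n, r])) (mem_of_eval _ (by simp [l, m, n, r]))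
  · show _ * _ ∈ mIdeal ^ (2 + 1)
    rw [pow_succ']
    exact Ideal.mul_mem_mul (mem_of_eval _ (by simp [l, m, n, r])) q_mem
  · show _ * _ ∈ mIdeal ^ (2 + 1)
    rw [pow_succ']
    exact Ideal.mul_mem_mul (mem_of_eval _ (by simp [l, m, n, r])) q_mem
  · exact mul3 (mem_of_eval _ (by simp [l, m, n, r])) (mem_of_eval _ (by simp [l, m, n, r])) (mem_of_eval _ (by simp [l, m, n, r]))
  · exact mul3 (mem_of_eval _ (by simp [l, m, n, r])) (mem_of_eval _ (by simp [l, m, n, r])) (mem_of_eval _ (by simp [l, m, n, r]))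

theorem statement2 :
    (∀ k : Fin 10, funcs k ∈ U ⊓ Submodule.restrictScalars ℂ (mIdeal ^ 3)) ∧
    LinearIndependent ℂ funcs ∧
    Submodule.span ℂ (Set.range funcs) = U ⊓ Submodule.restrictScalars ℂ (mIdeal ^ 3) := by
  have h1 : ∀ k : Fin 10, funcs k ∈ U ⊓ Submodule.restrictScalars ℂ (mIdeal ^ 3) := by
    intro k
    refine ⟨?_, funcs_m3 k⟩
    rw [U, U_gens, funcs_eq]
    exact Submodule.sum_mem _ fun i _ => Submodule.smul_mem _ _ (Submodule.subset_span ⟨i, rfl⟩)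
  refine ⟨h1, ?_, le_antisymm ?_ ?_⟩
  · rw [Fintype.linearIndependent_iff]
    intro g hg
    rw [comb_eq] at hg
    exact li_aux g (Fintype.linearIndependent_iff.1 MM_li _ hg)
  · rw [Submodule.span_le]
    rintro _ ⟨k, rfl⟩
    exact h1 k
  · rintro p ⟨hU, hm⟩
    rw [U, U_gens] at hU
    obtain ⟨c, rfl⟩ := (Submodule.mem_span_range_iff_exists_fun ℂ).1 hU
    obtain ⟨j0, j1, j2⟩ := jets c hm
    obtain ⟨d, hd⟩ := span_aux c j0 j1 j2
    refine (Submodule.mem_span_range_iff_exists_fun ℂ).2 ⟨d, ?_⟩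
    rw [comb_eq]
    simp_rw [hd]

end Stmt2
end
end

section
/- The vector space of homogeneous cubic forms in ℂ[y₁,y₂,y₃,y₄] vanishing at all 12 points has dimension exactly 8; equivalently, the 12 points impose independent conditions on the 20-dimensional space of cubic forms in four variables. -/
/-!
Statement 3: the space of homogeneous cubics in 4 variables vanishing at the
12 points (coordinate points and `(1:±1:±1:±1)`) has dimension exactly 8;
equivalently the 12 points impose independent conditions on the
20-dimensional space of cubic forms.
-/

noncomputable section

namespace Stmt3

open MvPolynomial

/-- Representative vectors of the 12 points: the four coordinate points
together with the eight points `(1:±1:±1:±1)`. -/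
def pts : Set (Fin 4 → ℂ) :=
  {x | (∃ i, x = Pi.single i 1) ∨
       (∃ ε : Fin 3 → Bool, x = Fin.cons 1 fun i => if ε i then -1 else 1)}

/-- Polynomials vanishing at all 12 points. -/
def vanishing : Submodule ℂ (MvPolynomial (Fin 4) ℂ) :=
  ⨅ p ∈ pts, LinearMap.ker (aeval (R := ℂ) p).toLinearMap

def sgn (b : Bool) : ℂ := if b then -1 else 1

def pt : Fin 4 ⊕ (Fin 3 → Bool) → (Fin 4 → ℂ)
  | .inl i => Pi.single i 1
  | .inr ε => Fin.cons 1 fun i => if ε i then -1 else 1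

lemma mem_vanishing (f : MvPolynomial (Fin 4) ℂ) :
    f ∈ vanishing ↔ ∀ k, aeval (R := ℂ) (pt k) f = 0 := by
  simp only [vanishing, Submodule.mem_iInf, LinearMap.mem_ker, AlgHom.toLinearMap_apply]
  constructor
  · rintro h (i | ε)
    · exact h _ (Or.inl ⟨i, rfl⟩)
    · exact h _ (Or.inr ⟨ε, rfl⟩)
  · rintro h p (⟨i, rfl⟩ | ⟨ε, rfl⟩)
    · exact h (.inl i)
    · exact h (.inr ε)

def dual : Fin 4 ⊕ (Fin 3 → Bool) → MvPolynomial (Fin 4) ℂ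
  | .inl i => X i * X i * X i - X i * X (i + 1) * X (i + 1)
  | .inr ε =>
    let a := sgn (ε 0)
    let b := sgn (ε 1)
    let c := sgn (ε 2)
    (1 / 8 : ℂ) • (X 0 * X 1 * X 1 + a • (X 0 * X 0 * X 1) + b • (X 0 * X 0 * X 2)
      + c • (X 0 * X 0 * X 3) + (a * b) • (X 0 * X 1 * X 2) + (a * c) • (X 0 * X 1 * X 3)
      + (b * c) • (X 0 * X 2 * X 3) + (a * b * c) • (X 1 * X 2 * X 3))

lemma hom3 (i j k : Fin 4) :
    (X i * X j * X k : MvPolynomial (Fin 4) ℂ) ∈ homogeneousSubmodule (Fin 4) ℂ 3 := by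
  rw [mem_homogeneousSubmodule]
  exact ((isHomogeneous_X ℂ i).mul (isHomogeneous_X ℂ j)).mul (isHomogeneous_X ℂ k)

lemma dual_mem (k) : dual k ∈ homogeneousSubmodule (Fin 4) ℂ 3 := by
  rcases k with i | ε
  · exact Submodule.sub_mem _ (hom3 _ _ _) (hom3 _ _ _)
  · refine Submodule.smul_mem _ _ ?_
    repeat' first
      | exact hom3 _ _ _
      | apply Submodule.add_mem
      | apply Submodule.smul_mem

lemma eval_dual (k l) : aeval (R := ℂ) (pt l) (dual k) = if k = l then 1 else 0 := by
  rcases k with i | ε <;> rcases l with j | δ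
  · fin_cases i <;> fin_cases j <;> simp [dual, pt, Pi.single_apply]
  · have h : ∀ i, (pt (.inr δ) i) * pt (.inr δ) i = 1 := by
      intro i
      refine Fin.cases ?_ (fun i => ?_) i
      · simp [pt]
      · simp only [pt, Fin.cons_succ]; split_ifs <;> norm_num
    simp [dual, mul_assoc, h]
  · fin_cases j <;> simp [dual, pt, Pi.single_apply]
  · have e1 : pt (.inr δ) 0 = 1 := rfl
    have e2 : pt (.inr δ) 1 = sgn (δ 0) := rfl
    have e3 : pt (.inr δ) 2 = sgn (δ 1) := rfl
    have e4 : pt (.inr δ) 3 = sgn (δ 2) := rfl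
    have e5 : (Sum.inr ε : Fin 4 ⊕ (Fin 3 → Bool)) = Sum.inr δ ↔
        ε 0 = δ 0 ∧ ε 1 = δ 1 ∧ ε 2 = δ 2 := by
      rw [Sum.inr.injEq, funext_iff, Fin.forall_fin_succ, Fin.forall_fin_succ,
        Fin.forall_fin_succ]
      simp
    simp only [dual, map_smul, map_add, map_mul, aeval_X, e1, e2, e3, e4, e5, smul_eq_mul]
    generalize ε 0 = a
    generalize ε 1 = b
    generalize ε 2 = c
    generalize δ 0 = a'
    generalize δ 1 = b'
    generalize δ 2 = c'
    cases a <;> cases b <;> cases c <;> cases a' <;> cases b' <;> cases c' <;>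
      norm_num [sgn]

lemma finrank_hom : Module.finrank ℂ ↥(homogeneousSubmodule (Fin 4) ℂ 3) = 20 := by
  have hs : {d : Fin 4 →₀ ℕ | d.degree = 3} =
      ((Finset.univ : Finset (Fin 4)).finsuppAntidiag 3 : Set (Fin 4 →₀ ℕ)) := by
    ext d
    simp [Finset.mem_finsuppAntidiag, Finsupp.degree_eq_sum]
  rw [homogeneousSubmodule_eq_finsupp_supported, hs]
  refine (LinearEquiv.finrank_eq (AddMonoidAlgebra.supportedEquivFinsupp _)).trans ?_
  rw [Module.finrank_finsupp_self]
  refine (Fintype.card_coe _).trans ?_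
  rw [Finset.card_finsuppAntidiag_nat_eq_choose]
  rfl

def ev : ↥(homogeneousSubmodule (Fin 4) ℂ 3) →ₗ[ℂ] (Fin 4 ⊕ (Fin 3 → Bool) → ℂ) :=
  (LinearMap.pi fun k => (aeval (R := ℂ) (pt k)).toLinearMap) ∘ₗ Submodule.subtype _

lemma ev_surj : Function.Surjective ev := by
  intro v
  refine ⟨∑ k, v k • ⟨dual k, dual_mem k⟩, ?_⟩
  ext l
  have : ev (∑ k, v k • ⟨dual k, dual_mem k⟩) l
      = ∑ k, v k * aeval (R := ℂ) (pt l) (dual k) := by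
    rw [map_sum, Finset.sum_apply]
    refine Finset.sum_congr rfl fun k _ => ?_
    rw [map_smul]
    rfl
  rw [this]
  simp only [eval_dual, mul_ite, mul_one, mul_zero, Finset.sum_ite_eq', Finset.mem_univ, if_true]

theorem statement3 :
    Module.finrank ℂ ↥(homogeneousSubmodule (Fin 4) ℂ 3 ⊓ vanishing) = 8 ∧
    Module.finrank ℂ ↥(homogeneousSubmodule (Fin 4) ℂ 3) = 20 := by
  refine ⟨?_, finrank_hom⟩
  have : FiniteDimensional ℂ ↥(homogeneousSubmodule (Fin 4) ℂ 3) :=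
    Module.finite_of_finrank_pos (by rw [finrank_hom]; norm_num)
  have h1 := LinearMap.finrank_range_add_finrank_ker ev
  rw [LinearMap.range_eq_top.2 ev_surj, finrank_top, finrank_hom] at h1
  have h2 : LinearMap.ker ev = vanishing.comap (homogeneousSubmodule (Fin 4) ℂ 3).subtype := by
    ext f
    rw [LinearMap.mem_ker, Submodule.mem_comap, mem_vanishing, funext_iff]
    rfl
  have h3 : (LinearMap.ker ev).map (homogeneousSubmodule (Fin 4) ℂ 3).subtype =
      homogeneousSubmodule (Fin 4) ℂ 3 ⊓ vanishing := by
    rw [h2, Submodule.map_comap_subtype]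
  rw [← h3, (Submodule.equivSubtypeMap _ (LinearMap.ker ev)).symm.finrank_eq]
  simp at h1
  omega

end Stmt3
end
end

section
/- Among the 12 points, exactly 16 of the 3-element subsets are collinear (i.e., representative vectors in ℂ⁴ span a subspace of dimension at most 2), no 4 of the 12 points are collinear, and each collinear triple contains exactly one coordinate point, exactly one point (1:±1:±1:±1) with an even number of minus signs, and exactly one point (1:±1:±1:±1) with an odd number of minus signs. -/
/-!
Statement 4: among the 12 points, exactly 16 of the 3-element subsets are
collinear, no 4 points are collinear, and each collinear triple contains
exactly one coordinate point, one even-sign point `(1:±1:±1:±1)` and one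
odd-sign point.
-/

noncomputable section

namespace Stmt4

/-- The four coordinate points. -/
def coordSet : Set (Fin 4 → ℂ) := {x | ∃ i, x = Pi.single i 1}

/-- The point `(1:±1:±1:±1)` with signs given by `ε` (`true` = minus sign). -/
def signPt (ε : Fin 3 → Bool) : Fin 4 → ℂ :=
  Fin.cons 1 fun i => if ε i then -1 else 1

/-- The points `(1:±1:±1:±1)` with an even number of minus signs. -/
def evenSet : Set (Fin 4 → ℂ) :=
  {x | ∃ ε : Fin 3 → Bool,
    x = signPt ε ∧ Even (Finset.univ.filter (fun i => ε i = true)).card}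

/-- The points `(1:±1:±1:±1)` with an odd number of minus signs. -/
def oddSet : Set (Fin 4 → ℂ) :=
  {x | ∃ ε : Fin 3 → Bool,
    x = signPt ε ∧ Odd (Finset.univ.filter (fun i => ε i = true)).card}

/-- The 12 points. -/
def pts : Set (Fin 4 → ℂ) := coordSet ∪ evenSet ∪ oddSet

/-- A set of points of ℙ³ (given by representative vectors) is collinear if
the representatives span a subspace of dimension at most 2. -/
def Collinear' (T : Set (Fin 4 → ℂ)) : Prop :=
  Module.finrank ℂ ↥(Submodule.span ℂ T) ≤ 2

def pv (i : Fin 12) (c : Fin 4) : ℤ :=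
  if i.val < 4 then (if i.val = c.val then 1 else 0)
  else match i.val, c.val with
  | _, 0 => 1
  | 5, 1 => -1 | 5, 2 => -1
  | 6, 1 => -1 | 6, 3 => -1
  | 7, 2 => -1 | 7, 3 => -1
  | 8, 1 => -1
  | 9, 2 => -1
  | 10, 3 => -1
  | 11, _ => -1
  | _, _ => 1

def sZ (ε : Fin 3 → Bool) : Fin 4 → ℤ :=
  Fin.cons 1 fun i => if ε i then -1 else 1

def PP (i : Fin 12) : Fin 4 → ℂ := fun c => (pv i c : ℂ)

def Cs : Finset (Fin 12) := {0, 1, 2, 3}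
def Es : Finset (Fin 12) := {4, 5, 6, 7}
def Os : Finset (Fin 12) := {8, 9, 10, 11}

def D3 (i j k : Fin 12) (a b c : Fin 4) : ℤ :=
  pv i a * (pv j b * pv k c - pv j c * pv k b)
  - pv i b * (pv j a * pv k c - pv j c * pv k a)
  + pv i c * (pv j a * pv k b - pv j b * pv k a)

def dep (i j k : Fin 12) : Prop :=
  D3 i j k 0 1 2 = 0 ∧ D3 i j k 0 1 3 = 0 ∧ D3 i j k 0 2 3 = 0 ∧ D3 i j k 1 2 3 = 0

instance instDep (i j k : Fin 12) : Decidable (dep i j k) := by unfold dep; infer_instance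

def Dep (s : Finset (Fin 12)) : Prop := ∀ i ∈ s, ∀ j ∈ s, ∀ k ∈ s, dep i j k

instance instDepS (s : Finset (Fin 12)) : Decidable (Dep s) := by unfold Dep; infer_instance

theorem signPt_eq (ε : Fin 3 → Bool) : signPt ε = fun c => (sZ ε c : ℂ) := by
  funext c
  refine Fin.cases ?_ (fun i => ?_) c
  · simp [signPt, sZ]
  · simp only [signPt, sZ, Fin.cons_succ]
    split <;> simp

theorem PP_inj : Function.Injective PP := by
  intro i j h
  have h2 : ∀ c, pv i c = pv j c := fun c => by
    have := congrFun h c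
    simpa [PP] using this
  have key : ∀ i j : Fin 12, (∀ c, pv i c = pv j c) → i = j := by decide +kernel
  exact key i j h2

theorem coord_eq : coordSet = PP '' (Cs : Set (Fin 12)) := by
  have cast : ∀ (i : Fin 12) (j : Fin 4), (∀ c, pv i c = if c = j then 1 else 0) →
      PP i = Pi.single j 1 := by
    intro i j h
    funext c
    simp only [PP, h c, Pi.single_apply]
    split <;> simp
  have k1 : ∀ j : Fin 4, ∃ i ∈ Cs, ∀ c, pv i c = if c = j then 1 else 0 := by decide +kernel
  have k2 : ∀ i ∈ Cs, ∃ j : Fin 4, ∀ c, pv i c = if c = j then 1 else 0 := by decide +kernel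
  ext x
  constructor
  · rintro ⟨j, rfl⟩
    obtain ⟨i, hi, h⟩ := k1 j
    exact ⟨i, hi, cast i j h⟩
  · rintro ⟨i, hi, rfl⟩
    obtain ⟨j, h⟩ := k2 i hi
    exact ⟨j, cast i j h⟩

theorem PP_sign (i : Fin 12) (ε : Fin 3 → Bool) (h : ∀ c, pv i c = sZ ε c) :
    PP i = signPt ε := by
  rw [signPt_eq]; funext c; simp [PP, h c]

theorem even_eq : evenSet = PP '' (Es : Set (Fin 12)) := by
  have k1 : ∀ ε : Fin 3 → Bool, Even (Finset.univ.filter (fun i => ε i = true)).card →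
    ∃ i ∈ Es, ∀ c, pv i c = sZ ε c := by decide +kernel
  have k2 : ∀ i ∈ Es, ∃ ε : Fin 3 → Bool, Even (Finset.univ.filter (fun i => ε i = true)).card ∧
    ∀ c, pv i c = sZ ε c := by decide +kernel
  ext x
  constructor
  · rintro ⟨ε, rfl, he⟩
    obtain ⟨i, hi, h⟩ := k1 ε he
    exact ⟨i, hi, PP_sign i ε h⟩
  · rintro ⟨i, hi, rfl⟩
    obtain ⟨ε, he, h⟩ := k2 i hi
    exact ⟨ε, PP_sign i ε h, he⟩

theorem odd_eq : oddSet = PP '' (Os : Set (Fin 12)) := by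
  have k1 : ∀ ε : Fin 3 → Bool, Odd (Finset.univ.filter (fun i => ε i = true)).card →
    ∃ i ∈ Os, ∀ c, pv i c = sZ ε c := by decide +kernel
  have k2 : ∀ i ∈ Os, ∃ ε : Fin 3 → Bool, Odd (Finset.univ.filter (fun i => ε i = true)).card ∧
    ∀ c, pv i c = sZ ε c := by decide +kernel
  ext x
  constructor
  · rintro ⟨ε, rfl, he⟩
    obtain ⟨i, hi, h⟩ := k1 ε he
    exact ⟨i, hi, PP_sign i ε h⟩
  · rintro ⟨i, hi, rfl⟩
    obtain ⟨ε, he, h⟩ := k2 i hi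
    exact ⟨ε, PP_sign i ε h, he⟩

theorem pts_eq : pts = Set.range PP := by
  rw [pts, coord_eq, even_eq, odd_eq, ← Set.image_union, ← Set.image_union, ← Set.image_univ]
  congr 1
  have : ∀ i : Fin 12, (i ∈ Cs ∨ i ∈ Es) ∨ i ∈ Os := by decide +kernel
  ext i
  simpa using this i

theorem exists_finset {T : Set (Fin 4 → ℂ)} (h : T ⊆ pts) :
    ∃ s : Finset (Fin 12), T = PP '' (s : Set (Fin 12)) := by
  classical
  rw [pts_eq] at h
  refine ⟨(PP ⁻¹' T).toFinset, ?_⟩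
  rw [Set.coe_toFinset, Set.image_preimage_eq_of_subset h]

theorem ncard_PP (s : Finset (Fin 12)) : (PP '' (s : Set (Fin 12))).ncard = s.card := by
  rw [Set.ncard_image_of_injective _ PP_inj, Set.ncard_coe_finset]

theorem D3_zero {T : Set (Fin 4 → ℂ)} (h : Collinear' T) {i j k : Fin 12}
    (hi : PP i ∈ T) (hj : PP j ∈ T) (hk : PP k ∈ T) (a b c : Fin 4) : D3 i j k a b c = 0 := by
  by_contra hne
  let M : Matrix (Fin 3) (Fin 3) ℂ := fun r s => PP (![i, j, k] r) (![a, b, c] s)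
  have hdet : M.det = (D3 i j k a b c : ℂ) := by
    rw [Matrix.det_fin_three]
    simp [M, D3, PP]
    ring
  have hM : IsUnit M := by
    rw [Matrix.isUnit_iff_isUnit_det, hdet, isUnit_iff_ne_zero]
    exact_mod_cast hne
  have hli : LinearIndependent ℂ M.row := Matrix.linearIndependent_rows_iff_isUnit.mpr hM
  have hli2 : LinearIndependent ℂ (fun r => PP (![i, j, k] r)) :=
    LinearIndependent.of_comp (LinearMap.funLeft ℂ ℂ ![a, b, c]) hli
  have hc := finrank_span_eq_card hli2
  have hsub : Submodule.span ℂ (Set.range fun r => PP (![i, j, k] r)) ≤ Submodule.span ℂ T := by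
    apply Submodule.span_mono
    rintro _ ⟨r, rfl⟩
    fin_cases r <;> simpa
  have := Submodule.finrank_mono hsub
  unfold Collinear' at h
  rw [Fintype.card_fin] at hc
  omega

theorem Dep_of {s : Finset (Fin 12)} (h : Collinear' (PP '' (s : Set (Fin 12)))) : Dep s := by
  intro i hi j hj k hk
  have := fun a b c => D3_zero h (Set.mem_image_of_mem PP hi) (Set.mem_image_of_mem PP hj)
    (Set.mem_image_of_mem PP hk) a b c
  exact ⟨this _ _ _, this _ _ _, this _ _ _, this _ _ _⟩

def rel (i j k : Fin 12) : Prop := ∃ x y : Bool, ∀ c : Fin 4,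
  pv j c = (if x then 1 else -1) * pv k c + (if y then 2 else -2) * pv i c

instance instRel (i j k : Fin 12) : Decidable (rel i j k) := by unfold rel; infer_instance

def good (i j k : Fin 12) : Prop := (i ∈ Cs ∧ j ∈ Es ∧ k ∈ Os) ∧ rel i j k

instance instGood (i j k : Fin 12) : Decidable (good i j k) := by unfold good; infer_instance

theorem tri : ∀ i j k : Fin 12, i < j → j < k → dep i j k → good i j k := by decide +kernel

theorem sorted3 {s : Finset (Fin 12)} (hs : s.card = 3) :
    ∃ i j k : Fin 12, i < j ∧ j < k ∧ s = {i, j, k} := by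
  have hm := (s.orderEmbOfFin hs).strictMono
  refine ⟨s.orderEmbOfFin hs 0, s.orderEmbOfFin hs 1, s.orderEmbOfFin hs 2,
    hm (by decide), hm (by decide), ?_⟩
  apply Finset.coe_injective
  refine (Finset.range_orderEmbOfFin s hs).symm.trans ?_
  ext x
  simp only [Set.mem_range, Fin.exists_fin_succ, Finset.coe_insert, Finset.coe_singleton,
    Set.mem_insert_iff, Set.mem_singleton_iff]
  simp [eq_comm]

theorem cls : ∀ i ∈ Cs, ∀ j ∈ Es, ∀ k ∈ Os,
    ((({i, j, k} : Finset (Fin 12)) ∩ Cs).card = 1 ∧ (({i, j, k} : Finset (Fin 12)) ∩ Es).card = 1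
      ∧ (({i, j, k} : Finset (Fin 12)) ∩ Os).card = 1) := by decide +kernel

theorem comb3 (s : Finset (Fin 12)) (hs : s.card = 3) (h : Dep s) :
    ((s ∩ Cs).card = 1 ∧ (s ∩ Es).card = 1 ∧ (s ∩ Os).card = 1) := by
  obtain ⟨i, j, k, hij, hjk, rfl⟩ := sorted3 hs
  obtain ⟨⟨a, b, c⟩, -⟩ := tri i j k hij hjk (h _ (by simp) _ (by simp) _ (by simp))
  exact cls i a j b k c

theorem comb4 (s : Finset (Fin 12)) (hs : s.card = 4) : ¬ Dep s := by
  intro h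
  have hm := (s.orderEmbOfFin hs).strictMono
  have hmem := fun i => s.orderEmbOfFin_mem hs i
  have h1 := (tri _ _ _ (hm (by decide : (0 : Fin 4) < 1)) (hm (by decide : (1 : Fin 4) < 2))
    (h _ (hmem _) _ (hmem _) _ (hmem _))).1.2.1
  have h2 := (tri _ _ _ (hm (by decide : (1 : Fin 4) < 2)) (hm (by decide : (2 : Fin 4) < 3))
    (h _ (hmem _) _ (hmem _) _ (hmem _))).1.1
  have : ∀ x : Fin 12, x ∈ Es → x ∈ Cs → False := by decide +kernel
  exact this _ h1 h2

def Fs : Finset (Finset (Fin 12)) :=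
  ((Cs ×ˢ Es ×ˢ Os).filter fun t => dep t.1 t.2.1 t.2.2).image fun t => {t.1, t.2.1, t.2.2}

theorem combc : Fs.card = 16 := by decide +kernel

theorem Fs_aux : ∀ i ∈ Cs, ∀ j ∈ Es, ∀ k ∈ Os, dep i j k →
    ({i, j, k} : Finset (Fin 12)).card = 3 ∧ Dep {i, j, k} := by decide +kernel

theorem Fs_spec (s : Finset (Fin 12)) (hs : s ∈ Fs) : s.card = 3 ∧ Dep s := by
  obtain ⟨⟨i, j, k⟩, h, rfl⟩ := Finset.mem_image.mp hs
  simp only [Finset.mem_filter, Finset.mem_product] at h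
  exact Fs_aux i h.1.1 j h.1.2.1 k h.1.2.2 h.2

theorem mem_Fs {s : Finset (Fin 12)} (hs : s.card = 3) (h : Dep s) : s ∈ Fs := by
  obtain ⟨i, j, k, hij, hjk, rfl⟩ := sorted3 hs
  have hd : dep i j k := h _ (by simp) _ (by simp) _ (by simp)
  obtain ⟨⟨a, b, c⟩, -⟩ := tri i j k hij hjk hd
  refine Finset.mem_image.mpr ⟨(i, j, k), ?_, rfl⟩
  simp [a, b, c, hd]

theorem of_Dep {s : Finset (Fin 12)} (hs : s.card = 3) (h : Dep s) :
    Collinear' (PP '' (s : Set (Fin 12))) := by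
  obtain ⟨j, k, i, hij, hjk, rfl⟩ := sorted3 hs
  obtain ⟨-, x, y, hab⟩ := tri j k i hij hjk (h _ (by simp) _ (by simp) _ (by simp))
  generalize (if x then 1 else -1 : ℤ) = a at hab
  generalize (if y then 2 else -2 : ℤ) = b at hab
  have hle : Submodule.span ℂ (PP '' (({j, k, i} : Finset (Fin 12)) : Set (Fin 12))) ≤
      Submodule.span ℂ (({PP i, PP j} : Finset (Fin 4 → ℂ)) : Set (Fin 4 → ℂ)) := by
    have h1 : PP i ∈ Submodule.span ℂ
        (({PP i, PP j} : Finset (Fin 4 → ℂ)) : Set (Fin 4 → ℂ)) :=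
      Submodule.subset_span (by simp)
    have h2 : PP j ∈ Submodule.span ℂ
        (({PP i, PP j} : Finset (Fin 4 → ℂ)) : Set (Fin 4 → ℂ)) :=
      Submodule.subset_span (by simp)
    rw [Submodule.span_le]
    rintro _ ⟨l, hl, rfl⟩
    simp only [Finset.coe_insert, Finset.coe_singleton, Set.mem_insert_iff,
      Set.mem_singleton_iff] at hl
    rcases hl with rfl | rfl | rfl
    · exact h2
    · have : PP l = (a : ℂ) • PP i + (b : ℂ) • PP j := by
        funext c
        simp [PP, hab c]
      rw [this]
      exact Submodule.add_mem _ (Submodule.smul_mem _ _ h1) (Submodule.smul_mem _ _ h2)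
    · exact h1
  have := Submodule.finrank_mono hle
  have h3 := finrank_span_finset_le_card (R := ℂ) ({PP i, PP j} : Finset (Fin 4 → ℂ))
  have h4 := Finset.card_le_two (a := PP i) (b := PP j)
  unfold Collinear'
  unfold Set.finrank at h3
  omega

theorem img_inter (s t : Finset (Fin 12)) :
    (PP '' (s : Set (Fin 12)) ∩ PP '' (t : Set (Fin 12))).ncard = (s ∩ t).card := by
  rw [← Set.image_inter PP_inj, ← Finset.coe_inter, ncard_PP]

theorem statement4 :
    Set.ncard {T : Set (Fin 4 → ℂ) | T ⊆ pts ∧ T.ncard = 3 ∧ Collinear' T} = 16 ∧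
    (∀ T : Set (Fin 4 → ℂ), T ⊆ pts → T.ncard = 4 → ¬ Collinear' T) ∧
    (∀ T : Set (Fin 4 → ℂ), T ⊆ pts → T.ncard = 3 → Collinear' T →
      (T ∩ coordSet).ncard = 1 ∧ (T ∩ evenSet).ncard = 1 ∧ (T ∩ oddSet).ncard = 1) := by
  refine ⟨?_, ?_, ?_⟩
  · have : {T : Set (Fin 4 → ℂ) | T ⊆ pts ∧ T.ncard = 3 ∧ Collinear' T} =
        (fun s : Finset (Fin 12) => PP '' (s : Set (Fin 12))) ''
          (Fs : Set (Finset (Fin 12))) := by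
      ext T
      constructor
      · rintro ⟨h1, h2, h3⟩
        obtain ⟨s, rfl⟩ := exists_finset h1
        rw [ncard_PP] at h2
        exact ⟨s, mem_Fs h2 (Dep_of h3), rfl⟩
      · rintro ⟨s, hs, rfl⟩
        replace hs := Fs_spec s hs
        refine ⟨?_, ?_, of_Dep hs.1 hs.2⟩
        · rw [pts_eq]; exact Set.image_subset_range _ _
        · rw [ncard_PP]; exact hs.1
    rw [this, Set.ncard_image_of_injective, Set.ncard_coe_finset, combc]
    intro s t h
    exact Finset.coe_injective (PP_inj.image_injective h)
  · intro T h1 h2 h3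
    obtain ⟨s, rfl⟩ := exists_finset h1
    rw [ncard_PP] at h2
    exact comb4 s h2 (Dep_of h3)
  · intro T h1 h2 h3
    obtain ⟨s, rfl⟩ := exists_finset h1
    rw [ncard_PP] at h2
    rw [coord_eq, even_eq, odd_eq, img_inter, img_inter, img_inter]
    exact (comb3 s h2 (Dep_of h3))

end Stmt4
end
end

section
/- Let t₁ ≠ t₂ be two tritangent sets having a line class in common (t₁ ∩ t₂ ≠ ∅). Then there are exactly two reflections mapping t₁ onto t₂ and their roots are perpendicular: there exist roots α and β with α·β = 0 and α ∉ {β, −β}, such that the set of roots γ for which the reflection s_γ maps the set t₁ onto t₂ is exactly {α, −α, β, −β}. -/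
/-!
Statement 5: if two distinct tritangent sets share a line class, then there
are exactly two reflections mapping one onto the other, and the corresponding
roots are perpendicular.
-/

noncomputable section

namespace Stmt5

/-- The bilinear form `x·y = x₀y₀ − x₁y₁ − ⋯ − x₆y₆` on `Λ = ℤ⁷`. -/
def dot (x y : Fin 7 → ℤ) : ℤ := x 0 * y 0 - ∑ i : Fin 6, x i.succ * y i.succ

/-- The canonical class `K = (−3,1,1,1,1,1,1)`. -/
def K : Fin 7 → ℤ := ![-3, 1, 1, 1, 1, 1, 1]

/-- A line class: `e·e = −1` and `e·K = −1`. -/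
def IsLine (e : Fin 7 → ℤ) : Prop := dot e e = -1 ∧ dot e K = -1

/-- A root: `α·α = −2` and `α·K = 0`. -/
def IsRoot (α : Fin 7 → ℤ) : Prop := dot α α = -2 ∧ dot α K = 0

/-- A tritangent set: three line classes summing to `−K`. -/
def IsTritangent (t : Finset (Fin 7 → ℤ)) : Prop :=
  t.card = 3 ∧ (∀ e ∈ t, IsLine e) ∧ ∑ e ∈ t, e = -K

/-- The reflection in the root `α`: `s_α(x) = x + (x·α)α`. -/
def refl (α : Fin 7 → ℤ) (x : Fin 7 → ℤ) : Fin 7 → ℤ := x + dot x α • α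

theorem dot_comm (x y : Fin 7 → ℤ) : dot x y = dot y x := by
  simp only [dot, mul_comm]

theorem dot_add_left (x y z : Fin 7 → ℤ) : dot (x + y) z = dot x z + dot y z := by
  simp [dot, Fin.sum_univ_succ]; ring

theorem dot_neg_left (x z : Fin 7 → ℤ) : dot (-x) z = -dot x z := by
  simp [dot, Fin.sum_univ_succ]; ring

theorem dot_sub_left (x y z : Fin 7 → ℤ) : dot (x - y) z = dot x z - dot y z := by
  rw [sub_eq_add_neg, dot_add_left, dot_neg_left]; ring

theorem dot_smul_left (n : ℤ) (x z : Fin 7 → ℤ) : dot (n • x) z = n * dot x z := by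
  simp [dot, Fin.sum_univ_succ]; ring

theorem dot_add_right (x y z : Fin 7 → ℤ) : dot z (x + y) = dot z x + dot z y := by
  simp only [dot_comm z, dot_add_left]

theorem dot_neg_right (x z : Fin 7 → ℤ) : dot z (-x) = -dot z x := by
  simp only [dot_comm z, dot_neg_left]

theorem dot_sub_right (x y z : Fin 7 → ℤ) : dot z (x - y) = dot z x - dot z y := by
  simp only [dot_comm z, dot_sub_left]

theorem dot_smul_right (n : ℤ) (x z : Fin 7 → ℤ) : dot z (n • x) = n * dot z x := by
  simp only [dot_comm z, dot_smul_left]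

theorem neg_def (v : Fin 7 → ℤ) (hK : dot v K = 0) (hv : v ≠ 0) : dot v v < 0 := by
  by_contra hcon
  push Not at hcon
  apply hv
  have hk : 3 * v 0 = -∑ i : Fin 6, v i.succ := by
    simp [dot, K, Fin.sum_univ_succ] at hK ⊢
    linarith
  have hcs : (∑ i : Fin 6, v i.succ) ^ 2 ≤ 6 * ∑ i : Fin 6, v i.succ ^ 2 := by
    have := sq_sum_le_card_mul_sum_sq (s := Finset.univ) (f := fun i : Fin 6 => v i.succ)
    simpa using this
  have hd : ∑ i : Fin 6, v i.succ ^ 2 ≤ v 0 ^ 2 := by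
    simp only [dot, ← pow_two] at hcon
    linarith
  have h9 : 9 * v 0 ^ 2 = (∑ i : Fin 6, v i.succ) ^ 2 := by
    rw [show ∑ i : Fin 6, v i.succ = -(3 * v 0) by linarith]
    ring
  have h0 : v 0 = 0 := by
    have : v 0 ^ 2 = 0 := by nlinarith [sq_nonneg (v 0)]
    exact pow_eq_zero_iff (two_ne_zero) |>.1 this
  have hs : ∑ i : Fin 6, v i.succ ^ 2 = 0 := by
    apply le_antisymm
    · rw [h0] at hd; simpa using hd
    · exact Finset.sum_nonneg fun i _ => sq_nonneg _
  rw [Finset.sum_eq_zero_iff_of_nonneg (fun i _ => sq_nonneg _)] at hs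
  funext i
  refine Fin.cases h0 (fun j => ?_) i
  simpa using hs j (Finset.mem_univ j)

theorem tri_split {t : Finset (Fin 7 → ℤ)} (h : IsTritangent t) {a : Fin 7 → ℤ} (ha : a ∈ t) :
    ∃ b c, t = {a, b, c} ∧ IsLine a ∧ IsLine b ∧ IsLine c ∧ a + b + c = -K ∧
      dot a b = 1 ∧ dot a c = 1 ∧ dot b c = 1 := by
  obtain ⟨hc, hl, hs⟩ := h
  have h2 : (t.erase a).card = 2 := by rw [Finset.card_erase_of_mem ha, hc]
  obtain ⟨b, c, hbc, he⟩ := Finset.card_eq_two.1 h2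
  have ht : t = {a, b, c} := by rw [← Finset.insert_erase ha, he]
  have hna : a ∉ ({b, c} : Finset (Fin 7 → ℤ)) := by rw [← he]; simp
  have la := hl a ha
  have lb := hl b (by simp [ht])
  have lc := hl c (by simp [ht])
  have hsum : a + b + c = -K := by
    rw [← hs, ht, Finset.sum_insert hna, Finset.sum_pair hbc, add_assoc]
  have e1 := congrArg (dot a) hsum
  have e2 := congrArg (dot b) hsum
  have e3 := congrArg (dot c) hsum
  simp only [dot_add_right, dot_neg_right, la.1, lb.1, lc.1, la.2, lb.2, lc.2,
    dot_comm b a, dot_comm c a, dot_comm c b] at e1 e2 e3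
  exact ⟨b, c, ht, la, lb, lc, hsum, by linarith, by linarith, by linarith⟩

theorem refl_neg (γ x : Fin 7 → ℤ) : refl (-γ) x = refl γ x := by
  simp [refl, dot_neg_right]

theorem line_diff {b d : Fin 7 → ℤ} (hb : IsLine b) (hd : IsLine d) (hne : b ≠ d) :
    -1 < dot b d := by
  have := neg_def (b - d) (by rw [dot_sub_left, hb.2, hd.2]; ring) (sub_ne_zero.2 hne)
  simp only [dot_sub_left, dot_sub_right, hb.1, hd.1, dot_comm d b] at this
  linarith

theorem root_diff {b d : Fin 7 → ℤ} (hb : IsLine b) (hd : IsLine d) (h : dot b d = 0) :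
    IsRoot (b - d) := by
  constructor
  · simp only [dot_sub_left, dot_sub_right, hb.1, hd.1, dot_comm d b, h]; norm_num
  · rw [dot_sub_left, hb.2, hd.2]; ring

theorem refl_eq {γ b d : Fin 7 → ℤ} (hb : IsLine b) (hd : IsLine d) (hγ : IsRoot γ)
    (h : refl γ b = d) : dot b γ * dot b γ = 1 + dot b d ∧ dot b γ • γ = d - b := by
  have h1 : dot b γ • γ = d - b := by rw [← h, refl]; abel
  refine ⟨?_, h1⟩
  have h2 := congrArg (fun v => dot v v) h1
  simp only [dot_sub_left, dot_sub_right, dot_smul_left, dot_smul_right, hb.1, hd.1, hγ.1,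
    dot_comm d b] at h2
  linarith

theorem refl_eq' {γ b d : Fin 7 → ℤ} (hb : IsLine b) (hd : IsLine d) (hγ : IsRoot γ)
    (h : refl γ b = d) (h0 : dot b d = 0) : γ = b - d ∨ γ = -(b - d) := by
  obtain ⟨h1, h2⟩ := refl_eq hb hd hγ h
  rw [h0, add_zero] at h1
  rcases mul_self_eq_one_iff.1 h1 with h3 | h3
  · right; rw [h3, one_smul] at h2; rw [h2]; abel
  · left; rw [h3, neg_smul, one_smul] at h2; rw [← neg_neg γ, h2]; abel

theorem image_diff {a b c d e : Fin 7 → ℤ} (hb : IsLine b)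
    (hab : dot a b = 1) (hbc : dot b c = 1) (had : dot a d = 1)
    (hbd : dot b d = 0) (hcd : dot c d = 0) (hs : b + c = d + e) :
    ({a, b, c} : Finset (Fin 7 → ℤ)).image (refl (b - d)) = {a, d, e} := by
  have ea : refl (b - d) a = a := by simp [refl, dot_sub_right, hab, had]
  have eb : refl (b - d) b = d := by simp [refl, dot_sub_right, hb.1, hbd]
  have ec : refl (b - d) c = e := by
    rw [eq_comm, ← sub_eq_iff_eq_add'.2 hs]
    simp only [refl, dot_sub_right, dot_comm c b, hbc, hcd, sub_zero, one_smul]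
    abel
  rw [Finset.image_insert, Finset.image_insert, Finset.image_singleton, ea, eb, ec]

theorem statement5 (t₁ t₂ : Finset (Fin 7 → ℤ))
    (h₁ : IsTritangent t₁) (h₂ : IsTritangent t₂) (hne : t₁ ≠ t₂)
    (hcommon : (t₁ ∩ t₂).Nonempty) :
    ∃ α β : Fin 7 → ℤ, IsRoot α ∧ IsRoot β ∧ dot α β = 0 ∧ α ∉ ({β, -β} : Set (Fin 7 → ℤ)) ∧
      {γ : Fin 7 → ℤ | IsRoot γ ∧ t₁.image (refl γ) = t₂} = {α, -α, β, -β} := by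
  obtain ⟨a, ha⟩ := hcommon
  rw [Finset.mem_inter] at ha
  obtain ⟨b, c, rfl, la, lb, lc, hs1, hab, hac, hbc⟩ := tri_split h₁ ha.1
  obtain ⟨d, e, rfl, -, ld, le, hs2, had, hae, hde⟩ := tri_split h₂ ha.2
  have hs : b + c = d + e := by
    have := hs1.trans hs2.symm
    rw [add_assoc, add_assoc] at this
    exact add_left_cancel this
  have hne1 : b ≠ d := by
    rintro rfl
    exact hne (by rw [add_left_cancel hs])
  have hne2 : c ≠ d := by
    rintro rfl
    rw [add_comm] at hs
    exact hne (by rw [add_left_cancel hs, Finset.pair_comm])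
  have x1 := line_diff lb ld hne1
  have x2 := line_diff lc ld hne2
  have y1 := congrArg (dot b) hs
  have y2 := congrArg (dot c) hs
  have y3 := congrArg (dot d) hs
  simp only [dot_add_right, lb.1, lc.1, ld.1, hbc, hde, dot_comm c b, dot_comm d b, dot_comm d c]
    at y1 y2 y3
  have hbd : dot b d = 0 := by omega
  have hcd : dot c d = 0 := by omega
  have hbe : dot b e = 0 := by omega
  have hce : dot c e = 0 := by omega
  have ra := root_diff lb ld hbd
  have rb := root_diff lb le hbe
  have hdot : dot (b - d) (b - e) = 0 := by
    simp only [dot_sub_left, dot_sub_right, lb.1, hbe, hde, dot_comm d b, hbd]; norm_num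
  have i1 := image_diff (a := a) lb hab hbc had hbd hcd hs
  have i2 := image_diff (a := a) lb hab hbc hae hbe hce (hs.trans (add_comm d e))
  rw [Finset.pair_comm e d] at i2
  have rneg : ∀ γ, IsRoot γ → IsRoot (-γ) := fun γ h =>
    ⟨by rw [dot_neg_left, dot_neg_right, neg_neg, h.1], by rw [dot_neg_left, h.2, neg_zero]⟩
  have fneg : ∀ γ, refl (-γ) = refl γ := fun γ => funext (refl_neg γ)
  refine ⟨b - d, b - e, ra, rb, hdot, ?_, ?_⟩
  · rintro (h | h)
    · have := rb.1
      rw [h] at hdot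
      omega
    · have := rb.1
      rw [h, dot_neg_left] at hdot
      omega
  · ext γ
    simp only [Set.mem_ofPred_eq, Set.mem_insert_iff, Set.mem_singleton_iff]
    constructor
    · rintro ⟨hγ, him⟩
      have hm : refl γ b ∈ ({a, d, e} : Finset (Fin 7 → ℤ)) := by
        rw [← him]
        exact Finset.mem_image_of_mem _ (by simp)
      simp only [Finset.mem_insert, Finset.mem_singleton] at hm
      rcases hm with h | h | h
      · exfalso
        have h1 := (refl_eq lb la hγ h).1
        rw [dot_comm b a, hab] at h1
        generalize dot b γ = n at h1
        have : n < 2 := by nlinarith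
        have : -2 < n := by nlinarith
        interval_cases n <;> omega
      · rcases refl_eq' lb ld hγ h hbd with h | h <;> simp [h]
      · rcases refl_eq' lb le hγ h hbe with h | h <;> simp [h]
    · rintro (rfl | rfl | rfl | rfl)
      · exact ⟨ra, i1⟩
      · exact ⟨rneg _ ra, by rw [fneg]; exact i1⟩
      · exact ⟨rb, i2⟩
      · exact ⟨rneg _ rb, by rw [fneg]; exact i2⟩

end Stmt5
end
end

section
/- Let t₁, t₂, t₃ be pairwise distinct tritangent sets all containing a common line class. Then there exist four pairwise orthogonal roots α, β, γ, δ, each orthogonal to all three line classes of t₁, such that the reflections s_α and s_β each map the set t₂ onto t₃, and γ and δ are orthogonal to every line class in t₁ ∪ t₂ ∪ t₃ (so that the tritangent t₁ together with the four orthogonal roots α, β, γ, δ in its orthogonal complement determines a cross). -/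
/-!
Statement 6: for three pairwise distinct tritangent sets through a common
line class, there are four pairwise orthogonal roots α, β, γ, δ orthogonal to
all line classes of t₁, with s_α and s_β mapping t₂ onto t₃ and γ, δ
orthogonal to every line class of t₁ ∪ t₂ ∪ t₃ (the cross determined by t₁).
-/

noncomputable section

namespace Stmt6

/-- The bilinear form `x·y = x₀y₀ − x₁y₁ − ⋯ − x₆y₆` on `Λ = ℤ⁷`. -/
def dot (x y : Fin 7 → ℤ) : ℤ := x 0 * y 0 - ∑ i : Fin 6, x i.succ * y i.succ

/-- The canonical class `K = (−3,1,1,1,1,1,1)`. -/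
def K : Fin 7 → ℤ := ![-3, 1, 1, 1, 1, 1, 1]

/-- A line class: `e·e = −1` and `e·K = −1`. -/
def IsLine (e : Fin 7 → ℤ) : Prop := dot e e = -1 ∧ dot e K = -1

/-- A root: `α·α = −2` and `α·K = 0`. -/
def IsRoot (α : Fin 7 → ℤ) : Prop := dot α α = -2 ∧ dot α K = 0

/-- A tritangent set: three line classes summing to `−K`. -/
def IsTritangent (t : Finset (Fin 7 → ℤ)) : Prop :=
  t.card = 3 ∧ (∀ e ∈ t, IsLine e) ∧ ∑ e ∈ t, e = -K

/-- The reflection in the root `α`: `s_α(x) = x + (x·α)α`. -/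
def refl (α : Fin 7 → ℤ) (x : Fin 7 → ℤ) : Fin 7 → ℤ := x + dot x α • α

theorem dot_comm (x y : Fin 7 → ℤ) : dot x y = dot y x := by
  simp only [dot, Fin.sum_univ_six]; ring
theorem dot_add_left (x y z : Fin 7 → ℤ) : dot (x + y) z = dot x z + dot y z := by
  simp only [dot, Fin.sum_univ_six, Pi.add_apply]; ring
theorem dot_sub_left (x y z : Fin 7 → ℤ) : dot (x - y) z = dot x z - dot y z := by
  simp only [dot, Fin.sum_univ_six, Pi.sub_apply]; ring
theorem dot_neg_left (x z : Fin 7 → ℤ) : dot (-x) z = - dot x z := by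
  simp only [dot, Fin.sum_univ_six, Pi.neg_apply]; ring
theorem dot_sub_right (x y z : Fin 7 → ℤ) : dot z (x - y) = dot z x - dot z y := by
  simp only [dot, Fin.sum_univ_six, Pi.sub_apply]; ring

theorem dotK (x : Fin 7 → ℤ) :
    dot x K = -3 * x 0 - (x 1 + x 2 + x 3 + x 4 + x 5 + x 6) := by
  have h : dot x K = x 0 * (-3) - (x 1 * 1 + x 2 * 1 + x 3 * 1 + x 4 * 1 + x 5 * 1 + x 6 * 1) := by
    simp only [dot, Fin.sum_univ_six]; rfl
  rw [h]; ring

theorem dotE (x y : Fin 7 → ℤ) :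
    dot x y = x 0 * y 0 - (x 1 * y 1 + x 2 * y 2 + x 3 * y 3 + x 4 * y 4 + x 5 * y 5 + x 6 * y 6) := by
  simp only [dot, Fin.sum_univ_six]; rfl

theorem cs6 (a b c d e f : ℤ) :
    (a + b + c + d + e + f) ^ 2 ≤ 6 * (a * a + b * b + c * c + d * d + e * e + f * f) := by
  nlinarith [sq_nonneg (a - b), sq_nonneg (a - c), sq_nonneg (a - d), sq_nonneg (a - e),
    sq_nonneg (a - f), sq_nonneg (b - c), sq_nonneg (b - d), sq_nonneg (b - e), sq_nonneg (b - f),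
    sq_nonneg (c - d), sq_nonneg (c - e), sq_nonneg (c - f), sq_nonneg (d - e), sq_nonneg (d - f),
    sq_nonneg (e - f)]

theorem negdef (u : Fin 7 → ℤ) (hK : dot u K = 0) (h : 0 ≤ dot u u) : u = 0 := by
  rw [dotK] at hK
  rw [dotE] at h
  have c := cs6 (u 1) (u 2) (u 3) (u 4) (u 5) (u 6)
  have e : u 1 + u 2 + u 3 + u 4 + u 5 + u 6 = -3 * u 0 := by linarith
  rw [e] at c
  have z : ∀ t : ℤ, t * t ≤ 0 → t = 0 := fun t ht => by
    have := mul_self_nonneg t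
    exact mul_self_eq_zero.mp (le_antisymm ht this)
  have n1 := mul_self_nonneg (u 1)
  have n2 := mul_self_nonneg (u 2)
  have n3 := mul_self_nonneg (u 3)
  have n4 := mul_self_nonneg (u 4)
  have n5 := mul_self_nonneg (u 5)
  have n6 := mul_self_nonneg (u 6)
  have n0 := mul_self_nonneg (u 0)
  funext i
  fin_cases i <;> apply z <;> simp <;> nlinarith

theorem line_nonneg {e f : Fin 7 → ℤ} (he : IsLine e) (hf : IsLine f) (hne : e ≠ f) :
    0 ≤ dot e f := by
  by_contra hc
  apply hne
  rw [← sub_eq_zero]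
  apply negdef
  · rw [dot_sub_left, he.2, hf.2]; rfl
  · rw [dot_sub_left, dot_sub_right, dot_sub_right, he.1, hf.1, dot_comm f e]; omega

theorem dotKl {e : Fin 7 → ℤ} (he : IsLine e) : dot (-K) e = 1 := by
  rw [dot_neg_left, dot_comm, he.2]; rfl

def PP (l a b : Fin 7 → ℤ) : Prop :=
  IsLine a ∧ IsLine b ∧ dot l a = 1 ∧ dot l b = 1 ∧ dot a b = 1 ∧ l + a + b = -K

theorem PP.symm {l a b : Fin 7 → ℤ} (h : PP l a b) : PP l b a := by
  obtain ⟨h1, h2, h3, h4, h5, h6⟩ := h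
  exact ⟨h2, h1, h4, h3, by rw [dot_comm]; exact h5, by rw [← h6]; abel⟩

theorem PP.uniq {l a b c : Fin 7 → ℤ} (h : PP l a b) (h' : PP l a c) : b = c := by
  have := h.2.2.2.2.2.trans h'.2.2.2.2.2.symm
  exact add_left_cancel this

theorem PP.dis {l a a' b b' : Fin 7 → ℤ} (h : PP l a a') (k : PP l b b')
    (h1 : a ≠ b) (h2 : a' ≠ b) :
    dot a b = 0 ∧ dot a' b = 0 ∧ dot a b' = 0 ∧ dot a' b' = 0 := by
  have key : ∀ {a a' b b' : Fin 7 → ℤ}, PP l a a' → PP l b b' → a ≠ b → a' ≠ b →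
      dot a b = 0 ∧ dot a' b = 0 := by
    intro a a' b b' h k h1 h2
    have e := dotKl k.1
    rw [← h.2.2.2.2.2, dot_add_left, dot_add_left, k.2.2.1] at e
    have := line_nonneg h.1 k.1 h1
    have := line_nonneg h.2.1 k.1 h2
    omega
  obtain ⟨p, q⟩ := key h k h1 h2
  obtain ⟨r, s⟩ := key h k.symm
    (fun e => h2 (PP.uniq h (by rw [e]; exact k.symm)))
    (fun e => h1 (PP.uniq h.symm (by rw [e]; exact k.symm)))
  exact ⟨p, q, r, s⟩

theorem tri_PP {t : Finset (Fin 7 → ℤ)} (h : IsTritangent t) {l : Fin 7 → ℤ} (hl : l ∈ t) :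
    ∃ a b, PP l a b ∧ t = {l, a, b} := by
  obtain ⟨hc, hL, hs⟩ := h
  have h2 : (t.erase l).card = 2 := by rw [Finset.card_erase_of_mem hl, hc]
  obtain ⟨a, b, hab, he⟩ := Finset.card_eq_two.mp h2
  have ht : t = {l, a, b} := by rw [← Finset.insert_erase hl, he]
  have hla : l ∉ ({a, b} : Finset (Fin 7 → ℤ)) := by rw [← he]; simp
  rw [ht, Finset.sum_insert hla, Finset.sum_pair hab] at hs
  have Ll := hL l hl
  have La := hL a (by rw [ht]; simp)
  have Lb := hL b (by rw [ht]; simp)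
  have e1 := dotKl Ll
  have e2 := dotKl La
  have e3 := dotKl Lb
  rw [← hs, dot_add_left, dot_add_left] at e1 e2 e3
  rw [Ll.1, dot_comm a l, dot_comm b l] at e1
  rw [La.1, dot_comm b a] at e2
  rw [Lb.1] at e3
  exact ⟨a, b, ⟨La, Lb, by omega, by omega, by omega, by rw [← hs, add_assoc]⟩, ht⟩

def bv (i : Fin 7) : Fin 7 → ℤ := Pi.single i 1

def LL : List (Fin 7 → ℤ) :=
  (List.finRange 6).map (fun i => bv i.succ) ++
  (List.finRange 6).flatMap (fun i => ((List.finRange 6).filter (fun j => i < j)).map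
    (fun j => bv 0 - bv i.succ - bv j.succ)) ++
  (List.finRange 6).map (fun i => fun k => if k = 0 then 2 else if k = i.succ then 0 else -1)

instance (e : Fin 7 → ℤ) : Decidable (IsLine e) := by unfold IsLine; infer_instance

theorem LL_line : ∀ e ∈ LL, IsLine e := by decide +kernel
theorem LL_nodup : LL.Nodup := by decide +kernel
theorem LL_ten : ∀ l ∈ LL, (LL.filter (fun e => dot l e = 1)).length = 10 := by decide +kernel

def bz (b : Bool) : ℤ := if b then 1 else 0

theorem LL0 : ∀ p q r s t u : Bool, IsLine ![0, bz p, bz q, bz r, bz s, bz t, bz u] →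
    ![0, bz p, bz q, bz r, bz s, bz t, bz u] ∈ LL := by decide +kernel
theorem LL1 : ∀ p q r s t u : Bool, IsLine ![1, -bz p, -bz q, -bz r, -bz s, -bz t, -bz u] →
    ![1, -bz p, -bz q, -bz r, -bz s, -bz t, -bz u] ∈ LL := by decide +kernel
theorem LL2 : ∀ p q r s t u : Bool, IsLine ![2, -bz p, -bz q, -bz r, -bz s, -bz t, -bz u] →
    ![2, -bz p, -bz q, -bz r, -bz s, -bz t, -bz u] ∈ LL := by decide +kernel

theorem nn (t : ℤ) : 0 ≤ t * (t - 1) := by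
  rcases le_or_gt t 0 with h | h <;> nlinarith

theorem bz_of (t : ℤ) (h : t * (t - 1) ≤ 0) : ∃ b, t = bz b := by
  have h0 := le_antisymm h (nn t)
  rcases mul_eq_zero.mp h0 with h | h
  · exact ⟨false, h⟩
  · exact ⟨true, by simp [bz]; omega⟩

theorem six (a b c d e f : ℤ) (h : a * a + b * b + c * c + d * d + e * e + f * f
      = a + b + c + d + e + f) :
    ∃ p q r s t u, a = bz p ∧ b = bz q ∧ c = bz r ∧ d = bz s ∧ e = bz t ∧ f = bz u := by
  have := nn a
  have := nn b
  have := nn c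
  have := nn d
  have := nn e
  have := nn f
  obtain ⟨p, hp⟩ := bz_of a (by linarith)
  obtain ⟨q, hq⟩ := bz_of b (by linarith)
  obtain ⟨r, hr⟩ := bz_of c (by linarith)
  obtain ⟨s, hs⟩ := bz_of d (by linarith)
  obtain ⟨t, ht⟩ := bz_of e (by linarith)
  obtain ⟨u, hu⟩ := bz_of f (by linarith)
  exact ⟨p, q, r, s, t, u, hp, hq, hr, hs, ht, hu⟩

theorem eta7 (x : Fin 7 → ℤ) : x = ![x 0, x 1, x 2, x 3, x 4, x 5, x 6] := by
  funext i; fin_cases i <;> rfl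

theorem mem_LL {x : Fin 7 → ℤ} (hx : IsLine x) : x ∈ LL := by
  have h1 := hx.1
  have h2 := hx.2
  rw [dotE] at h1
  rw [dotK] at h2
  have c := cs6 (x 1) (x 2) (x 3) (x 4) (x 5) (x 6)
  have e : x 1 + x 2 + x 3 + x 4 + x 5 + x 6 = 1 - 3 * x 0 := by linarith
  have e' : x 1 * x 1 + x 2 * x 2 + x 3 * x 3 + x 4 * x 4 + x 5 * x 5 + x 6 * x 6
    = x 0 * x 0 + 1 := by linarith
  rw [e, e'] at c
  have l0 : 0 ≤ x 0 := by nlinarith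
  have l2 : x 0 ≤ 2 := by nlinarith
  have h3 : x 0 = 0 ∨ x 0 = 1 ∨ x 0 = 2 := by omega
  have neg : ∀ {s t : ℤ}, -s = t → s = -t := fun h => by omega
  rcases h3 with h3 | h3 | h3 <;> rw [h3] at e e'
  · obtain ⟨p, q, r, s, t, u, hp, hq, hr, hs, ht, hu⟩ :=
      six (x 1) (x 2) (x 3) (x 4) (x 5) (x 6) (by linarith)
    have E := eta7 x
    rw [h3, hp, hq, hr, hs, ht, hu] at E
    rw [E] at hx ⊢
    exact LL0 _ _ _ _ _ _ hx
  · obtain ⟨p, q, r, s, t, u, hp, hq, hr, hs, ht, hu⟩ :=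
      six (-x 1) (-x 2) (-x 3) (-x 4) (-x 5) (-x 6) (by linarith)
    have E := eta7 x
    rw [h3, neg hp, neg hq, neg hr, neg hs, neg ht, neg hu] at E
    rw [E] at hx ⊢
    exact LL1 _ _ _ _ _ _ hx
  · obtain ⟨p, q, r, s, t, u, hp, hq, hr, hs, ht, hu⟩ :=
      six (-x 1) (-x 2) (-x 3) (-x 4) (-x 5) (-x 6) (by linarith)
    have E := eta7 x
    rw [h3, neg hp, neg hq, neg hr, neg hs, neg ht, neg hu] at E
    rw [E] at hx ⊢
    exact LL2 _ _ _ _ _ _ hx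

theorem K_sq : dot K K = 3 := by decide +kernel

theorem PP_mk {l a : Fin 7 → ℤ} (hl : IsLine l) (ha : IsLine a) (h : dot l a = 1) :
    PP l a (-K - l - a) := by
  have h' := h
  rw [dot_comm] at h'
  have k1 := hl.2
  have k2 := ha.2
  have k3 := k1
  have k4 := k2
  rw [dot_comm] at k3 k4
  have := hl.1
  have := ha.1
  have := K_sq
  have r : ∀ x, dot x (-K) = - dot x K := fun x => by
    rw [dot_comm, dot_neg_left, dot_comm]
  refine ⟨ha, ⟨?_, ?_⟩, h, ?_, ?_, by abel⟩ <;>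
    simp only [dot_sub_left, dot_sub_right, dot_neg_left, r] <;> omega

theorem exists_new {l : Fin 7 → ℤ} (hl : IsLine l) (S : Finset (Fin 7 → ℤ)) (hS : S.card < 10) :
    ∃ d d', PP l d d' ∧ d ∉ S := by
  have hc : (LL.filter (fun e => dot l e = 1)).toFinset.card = 10 := by
    rw [List.toFinset_card_of_nodup (LL_nodup.filter _), LL_ten l (mem_LL hl)]
  obtain ⟨d, hd, hn⟩ := Finset.exists_mem_notMem_of_card_lt_card (hc ▸ hS)
  simp only [List.mem_toFinset, List.mem_filter, decide_eq_true_eq] at hd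
  exact ⟨d, _, PP_mk hl (LL_line d hd.1) hd.2, hn⟩

theorem root_sub {a b : Fin 7 → ℤ} (ha : IsLine a) (hb : IsLine b) (h : dot a b = 0) :
    IsRoot (a - b) := by
  have h' := h
  rw [dot_comm] at h'
  have := ha.1
  have := hb.1
  have := ha.2
  have := hb.2
  constructor <;> simp only [dot_sub_left, dot_sub_right] <;> omega

theorem refl_image {l b b' c c' : Fin 7 → ℤ} (hb : PP l b b') (hc : PP l c c')
    (h1 : dot b c = 0) (h2 : dot b' c = 0) :
    ({l, b, b'} : Finset (Fin 7 → ℤ)).image (refl (c - b)) = {l, c, c'} := by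
  have r1 : refl (c - b) l = l := by
    simp [refl, dot_sub_right, hb.2.2.1, hc.2.2.1]
  have r2 : refl (c - b) b = c := by
    simp [refl, dot_sub_right, h1, hb.1.1]
  have r3 : refl (c - b) b' = c' := by
    have e := hb.2.2.2.2.2.trans hc.2.2.2.2.2.symm
    rw [add_assoc, add_assoc] at e
    have e := add_left_cancel e
    have : dot b' b = 1 := hb.symm.2.2.2.2.1
    simp only [refl, dot_sub_right, h2, this]
    rw [eq_sub_of_add_eq' e]
    simp
  simp [Finset.image_insert, r1, r2, r3]

theorem PP.ne {l a a' b b' : Fin 7 → ℤ} (h : PP l a a') (k : PP l b b')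
    (hne : ({l, a, a'} : Finset (Fin 7 → ℤ)) ≠ {l, b, b'}) : a ≠ b ∧ a' ≠ b := by
  constructor
  · rintro rfl
    exact hne (by rw [h.uniq k])
  · rintro rfl
    exact hne (by rw [h.symm.uniq k, Finset.pair_comm])

theorem statement6 (t₁ t₂ t₃ : Finset (Fin 7 → ℤ))
    (h₁ : IsTritangent t₁) (h₂ : IsTritangent t₂) (h₃ : IsTritangent t₃)
    (h12 : t₁ ≠ t₂) (h13 : t₁ ≠ t₃) (h23 : t₂ ≠ t₃)
    (hcommon : ∃ l, l ∈ t₁ ∧ l ∈ t₂ ∧ l ∈ t₃) :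
    ∃ α β γ δ : Fin 7 → ℤ,
      IsRoot α ∧ IsRoot β ∧ IsRoot γ ∧ IsRoot δ ∧
      dot α β = 0 ∧ dot α γ = 0 ∧ dot α δ = 0 ∧
      dot β γ = 0 ∧ dot β δ = 0 ∧ dot γ δ = 0 ∧
      (∀ e ∈ t₁, dot α e = 0 ∧ dot β e = 0 ∧ dot γ e = 0 ∧ dot δ e = 0) ∧
      t₂.image (refl α) = t₃ ∧ t₂.image (refl β) = t₃ ∧
      (∀ e ∈ t₁ ∪ t₂ ∪ t₃, dot γ e = 0 ∧ dot δ e = 0) := by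
  obtain ⟨l, l1, l2, l3⟩ := hcommon
  have hl : IsLine l := h₁.2.1 l l1
  obtain ⟨a, a', A, rfl⟩ := tri_PP h₁ l1
  obtain ⟨b, b', B, rfl⟩ := tri_PP h₂ l2
  obtain ⟨c, c', C, rfl⟩ := tri_PP h₃ l3
  obtain ⟨d, d', D, hd⟩ := exists_new hl {a, a', b, b', c, c'}
    (lt_of_le_of_lt Finset.card_le_six (by norm_num))
  obtain ⟨f, f', F, hf⟩ := exists_new hl ({d, d'} ∪ {a, a', b, b', c, c'})
    (lt_of_le_of_lt (Finset.card_union_le _ _) (lt_of_le_of_lt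
      (add_le_add Finset.card_le_two Finset.card_le_six) (by norm_num)))
  simp only [Finset.mem_union, Finset.mem_insert, Finset.mem_singleton, not_or] at hd hf
  obtain ⟨AB1, AB2, AB3, AB4⟩ := A.dis B (A.ne B h12).1 (A.ne B h12).2
  obtain ⟨AC1, AC2, AC3, AC4⟩ := A.dis C (A.ne C h13).1 (A.ne C h13).2
  obtain ⟨BC1, BC2, BC3, BC4⟩ := B.dis C (B.ne C h23).1 (B.ne C h23).2
  obtain ⟨AD1, AD2, AD3, AD4⟩ := A.dis D (Ne.symm hd.1) (Ne.symm hd.2.1)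
  obtain ⟨BD1, BD2, BD3, BD4⟩ := B.dis D (Ne.symm hd.2.2.1) (Ne.symm hd.2.2.2.1)
  obtain ⟨CD1, CD2, CD3, CD4⟩ := C.dis D (Ne.symm hd.2.2.2.2.1) (Ne.symm hd.2.2.2.2.2)
  obtain ⟨DF1, DF2, DF3, DF4⟩ := D.dis F (Ne.symm hf.1.1) (Ne.symm hf.1.2)
  replace hf := hf.2
  obtain ⟨AF1, AF2, AF3, AF4⟩ := A.dis F (Ne.symm hf.1) (Ne.symm hf.2.1)
  obtain ⟨BF1, BF2, BF3, BF4⟩ := B.dis F (Ne.symm hf.2.2.1) (Ne.symm hf.2.2.2.1)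
  obtain ⟨CF1, CF2, CF3, CF4⟩ := C.dis F (Ne.symm hf.2.2.2.2.1) (Ne.symm hf.2.2.2.2.2)
  have im2 : ({l, b, b'} : Finset (Fin 7 → ℤ)).image (refl (c' - b)) = {l, c, c'} := by
    rw [refl_image B C.symm BC3 BC4, Finset.pair_comm]
  have sw : ∀ {x y : Fin 7 → ℤ} {n : ℤ}, dot x y = n → dot y x = n := fun h => by
    rw [dot_comm]; exact h
  refine ⟨c - b, c' - b, d - f, d' - f, root_sub C.1 B.1 (sw BC1), root_sub C.2.1 B.1 (sw BC3),
    root_sub D.1 F.1 DF1, root_sub D.2.1 F.1 DF2, ?_, ?_, ?_, ?_, ?_, ?_, ?_,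
    refl_image B C BC1 BC2, im2, ?_⟩
  · simp only [dot_sub_left, dot_sub_right, C.2.2.2.2.1, sw BC1, BC3, B.1.1]; rfl
  · simp only [dot_sub_left, dot_sub_right, CD1, CF1, BD1, BF1]; rfl
  · simp only [dot_sub_left, dot_sub_right, CD3, CF1, BD3, BF1]; rfl
  · simp only [dot_sub_left, dot_sub_right, CD2, CF2, BD1, BF1]; rfl
  · simp only [dot_sub_left, dot_sub_right, CD4, CF2, BD3, BF1]; rfl
  · simp only [dot_sub_left, dot_sub_right, D.2.2.2.2.1, DF1, sw DF2, F.1.1]; rfl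
  · intro e he
    simp only [Finset.mem_insert, Finset.mem_singleton] at he
    rcases he with rfl | rfl | rfl
    · simp only [dot_sub_left, sw B.2.2.1, sw C.2.2.1, sw C.2.2.2.1, sw D.2.2.1, sw D.2.2.2.1,
        sw F.2.2.1, sub_self, and_self]
    · simp only [dot_sub_left, sw AB1, sw AC1, sw AC3, sw AD1, sw AD3, sw AF1, sub_self, and_self]
    · simp only [dot_sub_left, sw AB2, sw AC2, sw AC4, sw AD2, sw AD4, sw AF2, sub_self, and_self]
  · intro e he
    simp only [Finset.mem_union, Finset.mem_insert, Finset.mem_singleton] at he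
    rcases he with ((rfl | rfl | rfl) | (rfl | rfl | rfl)) | (rfl | rfl | rfl)
    · simp only [dot_sub_left, sw D.2.2.1, sw D.2.2.2.1, sw F.2.2.1, sub_self, and_self]
    · simp only [dot_sub_left, sw AD1, sw AD3, sw AF1, sub_self, and_self]
    · simp only [dot_sub_left, sw AD2, sw AD4, sw AF2, sub_self, and_self]
    · simp only [dot_sub_left, sw D.2.2.1, sw D.2.2.2.1, sw F.2.2.1, sub_self, and_self]
    · simp only [dot_sub_left, sw BD1, sw BD3, sw BF1, sub_self, and_self]
    · simp only [dot_sub_left, sw BD2, sw BD4, sw BF2, sub_self, and_self]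
    · simp only [dot_sub_left, sw D.2.2.1, sw D.2.2.2.1, sw F.2.2.1, sub_self, and_self]
    · simp only [dot_sub_left, sw CD1, sw CD3, sw CF1, sub_self, and_self]
    · simp only [dot_sub_left, sw CD2, sw CD4, sw CF2, sub_self, and_self]

end Stmt6
end
end

section
/- For every root α of Λ, the number of indices i ∈ {1,…,6} with α·a_i = 0 equals the number of indices i ∈ {1,…,6} with α·b_i = 0 (this common number is 4 when α is of type ±(a_j−a_i), 3 when α is of type ±(l−a_p−a_q−a_r), and 0 when α = ±(2l−a₁−⋯−a₆)). Consequently, in the sextic relation ∏_{l∈A} F_l = ∏_{l∈B} F_l for the double six A = {a₁,…,a₆}, B = {b₁,…,b₆}, the boundary divisors on both sides agree. -/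
/-!
Statement 7: for every root α, the number of indices i with α·a_i = 0 equals
the number of indices i with α·b_i = 0; the common number is 4 for roots of
type ±(a_j − a_i), 3 for roots of type ±(l − a_p − a_q − a_r), and 0 for
α = ±(2l − a₁ − ⋯ − a₆).
-/

noncomputable section

namespace Stmt7

/-- The bilinear form `x·y = x₀y₀ − x₁y₁ − ⋯ − x₆y₆` on `Λ = ℤ⁷`. -/
def dot (x y : Fin 7 → ℤ) : ℤ := x 0 * y 0 - ∑ i : Fin 6, x i.succ * y i.succ

/-- The canonical class `K = (−3,1,1,1,1,1,1)`. -/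
def K : Fin 7 → ℤ := ![-3, 1, 1, 1, 1, 1, 1]

/-- A root: `α·α = −2` and `α·K = 0`. -/
def IsRoot (α : Fin 7 → ℤ) : Prop := dot α α = -2 ∧ dot α K = 0

/-- The class `l` of a line in the plane. -/
def lv : Fin 7 → ℤ := Pi.single 0 1

/-- The six line classes `a_i` (exceptional divisors). -/
def a (i : Fin 6) : Fin 7 → ℤ := Pi.single i.succ 1

/-- The six line classes `b_i = 2l − (a₁ + ⋯ + a₆) + a_i`. -/
def b (i : Fin 6) : Fin 7 → ℤ := 2 • lv - (∑ j : Fin 6, a j) + a i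

/-- The highest root `h = 2l − a₁ − ⋯ − a₆`. -/
def h : Fin 7 → ℤ := 2 • lv - ∑ j : Fin 6, a j

theorem dot_a (α : Fin 7 → ℤ) (i : Fin 6) : dot α (a i) = -α i.succ := by
  simp [dot, a, Pi.single_apply, Fin.succ_ne_zero, (Fin.succ_ne_zero _).symm]

theorem dot_b (α : Fin 7 → ℤ) (hK : dot α K = 0) (i : Fin 6) :
    dot α (b i) = -α 0 - α i.succ := by
  have h1 : ∀ j, ∑ x : Fin 6, a x (Fin.succ j) = 1 := by
    intro j; simp [a, Pi.single_apply]
  have h2 : dot α (b i) = 2 * α 0 + ∑ j : Fin 6, α j.succ - α i.succ := by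
    have h0 : ∑ x : Fin 6, a x 0 = 0 := by
      simp [a, Pi.single_apply, (Fin.succ_ne_zero _).symm]
    have h3 : ∀ j : Fin 6, b i j.succ = -1 + if j = i then 1 else 0 := by
      intro j
      simp [b, h1, lv, a, Pi.single_apply]
    have h4 : b i 0 = 2 := by
      simp [b, h0, lv, a, (Fin.succ_ne_zero _).symm]
    simp only [dot, h3, h4, mul_add, Finset.sum_add_distrib]
    simp
    ring
  have h5 : dot α K = -3 * α 0 - ∑ j : Fin 6, α j.succ := by
    simp [dot, K, Fin.sum_univ_succ]
    ring
  linarith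

theorem card_eq (c : ℤ) (x : Fin 6 → ℤ) (h1 : ∑ i, x i ^ 2 = c ^ 2 + 2)
    (h2 : ∑ i, x i = -3 * c) :
    (Finset.univ.filter fun i : Fin 6 => x i = 0).card =
      (Finset.univ.filter fun i : Fin 6 => x i = -c).card := by
  have hcs := sq_sum_le_card_mul_sum_sq (s := Finset.univ) (f := x)
  rw [h1, h2] at hcs
  simp at hcs
  have hc1 : c ≤ 2 := by nlinarith
  have hc2 : -2 ≤ c := by nlinarith
  have key1 : c ^ 2 = 1 → (Finset.univ.filter fun i : Fin 6 => x i = 0).card =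
      (Finset.univ.filter fun i : Fin 6 => x i = -c).card := by
    intro hc
    have hs : ∑ i, x i * (x i + c) = 0 := by
      have : ∑ i, x i * (x i + c) = ∑ i, x i ^ 2 + (∑ i, x i) * c := by
        rw [Finset.sum_mul, ← Finset.sum_add_distrib]
        exact Finset.sum_congr rfl fun i _ => by ring
      rw [this, h1, h2]; linarith
    have hn : ∀ i ∈ Finset.univ, 0 ≤ x i * (x i + c) := by
      intro i _
      have hc' : c = 1 ∨ c = -1 := by
        have : (c - 1) * (c + 1) = 0 := by linarith [sq c]
        rcases mul_eq_zero.mp this with h | h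
        · left; linarith
        · right; linarith
      rcases le_or_gt (x i) 0 with h | h <;> rcases le_or_gt 0 (x i) with h' | h' <;>
        rcases hc' with rfl | rfl <;> nlinarith
    have hz := (Finset.sum_eq_zero_iff_of_nonneg hn).1 hs
    have hz' : ∀ i, x i = 0 ∨ x i = -c := by
      intro i
      rcases mul_eq_zero.mp (hz i (Finset.mem_univ i)) with h | h
      · exact Or.inl h
      · exact Or.inr (by linarith)
    have hc0 : c ≠ 0 := by rintro rfl; simp at hc
    have e1 : ∀ i, x i = (if x i = -c then 1 else 0) * (-c) := by
      intro i
      rcases hz' i with h | h <;> simp [h, hc0, eq_comm]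
    have e2 : ((Finset.univ.filter fun i : Fin 6 => x i = -c).card : ℤ) = 3 := by
      have : ∑ i, x i = ((Finset.univ.filter fun i : Fin 6 => x i = -c).card : ℤ) * (-c) := by
        rw [Finset.sum_congr rfl fun i _ => e1 i, ← Finset.sum_mul]
        simp
      rw [h2] at this
      exact mul_right_cancel₀ (neg_ne_zero.mpr hc0) (by linarith)
    have e3 := Finset.card_filter_add_card_filter_not (s := (Finset.univ : Finset (Fin 6)))
      (fun i => x i = -c)
    have e4 : (Finset.univ.filter fun i : Fin 6 => ¬ x i = -c) =
        (Finset.univ.filter fun i : Fin 6 => x i = 0) := by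
      ext i
      rcases hz' i with h | h <;> simp [h, hc0, eq_comm]
    rw [e4] at e3
    simp at e3
    omega
  have key2 : c ^ 2 = 4 → (Finset.univ.filter fun i : Fin 6 => x i = 0).card =
      (Finset.univ.filter fun i : Fin 6 => x i = -c).card := by
    intro hc
    have hs : ∑ i, (2 * x i + c) ^ 2 = 0 := by
      have : ∑ i, (2 * x i + c) ^ 2 = 4 * ∑ i, x i ^ 2 + 4 * c * (∑ i, x i) + 6 * c ^ 2 := by
        simp only [Fin.sum_univ_succ]
        simp
        ring
      rw [this, h1, h2]; linarith
    have hz := (Finset.sum_eq_zero_iff_of_nonneg (fun i _ => sq_nonneg _)).1 hs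
    have hz' : ∀ i, 2 * x i + c = 0 := fun i => by simpa using hz i (Finset.mem_univ i)
    have hc0 : c ≠ 0 := by rintro rfl; simp at hc
    congr 1
    ext i
    have := hz' i
    simp only [Finset.mem_filter, Finset.mem_univ, true_and]
    omega
  interval_cases c
  · exact key2 (by norm_num)
  · exact key1 (by norm_num)
  · simp
  · exact key1 (by norm_num)
  · exact key2 (by norm_num)

theorem statement7 (α : Fin 7 → ℤ) (hα : IsRoot α) :
    (Finset.univ.filter fun i : Fin 6 => dot α (a i) = 0).card =
      (Finset.univ.filter fun i : Fin 6 => dot α (b i) = 0).card ∧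
    ((∃ i j : Fin 6, i ≠ j ∧ α = a j - a i) →
      (Finset.univ.filter fun i : Fin 6 => dot α (a i) = 0).card = 4) ∧
    ((∃ p q r : Fin 6, p ≠ q ∧ p ≠ r ∧ q ≠ r ∧
        (α = lv - a p - a q - a r ∨ α = -(lv - a p - a q - a r))) →
      (Finset.univ.filter fun i : Fin 6 => dot α (a i) = 0).card = 3) ∧
    ((α = h ∨ α = -h) →
      (Finset.univ.filter fun i : Fin 6 => dot α (a i) = 0).card = 0) := by
  obtain ⟨hq, hK⟩ := hα
  have h5 : dot α K = -3 * α 0 - ∑ j : Fin 6, α j.succ := by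
    simp [dot, K, Fin.sum_univ_succ]
    ring
  have h6 : dot α α = α 0 ^ 2 - ∑ j : Fin 6, α j.succ ^ 2 := by
    simp [dot, sq]
  simp only [dot_a, dot_b α hK, neg_eq_zero]
  refine ⟨?_, ?_, ?_, ?_⟩
  · rw [card_eq (α 0) (fun i => α i.succ) (by linarith) (by linarith)]
    congr 1
    ext i
    simp only [Finset.mem_filter, Finset.mem_univ, true_and]
    constructor <;> intro h <;> linarith
  · rintro ⟨i, j, hij, rfl⟩
    clear hq hK h5 h6
    simp only [a, Pi.sub_apply, Pi.single_apply, Fin.succ_inj]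
    revert i j
    decide
  · rintro ⟨p, q, r, h1, h2, h3, rfl | rfl⟩ <;> clear hq hK h5 h6 <;>
      simp only [a, lv, Pi.sub_apply, Pi.neg_apply, Pi.single_apply, Fin.succ_inj,
        Fin.succ_ne_zero, if_false] <;> revert p q r <;> decide +kernel
  · have hh : ∀ i : Fin 6, h i.succ = -1 := by
      intro i
      simp [h, lv, a, Pi.single_apply]
    rintro (rfl | rfl) <;> simp [hh]

end Stmt7
end
end

section
/- The quintic form P(x) = Σ_c (w_c · x)⁵, the sum over all 27 line classes c of the fifth powers of the linear forms given by the corresponding weights w_c = c + K/3, is a nonzero polynomial function on K^⊥ ⊗ ℂ which is invariant under the Weyl group W(E₆) (i.e., P(s_α x) = P(x) for every root α and every x ∈ K^⊥ ⊗ ℂ), and every homogeneous degree-5 polynomial function on K^⊥ ⊗ ℂ invariant under all the reflections s_α is a scalar multiple of P; thus P = 0 defines Hunt's quintic, the unique W(E₆)-invariant quintic hypersurface in ℙ⁵. -/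
/-!
Statement 8: the quintic `P(x) = Σ_c (w_c · x)⁵` (sum over the 27 line
classes, `w_c = c + K/3`) is a nonzero `W(E₆)`-invariant polynomial function
on `K^⊥ ⊗ ℂ`, and every homogeneous degree-5 polynomial function on
`K^⊥ ⊗ ℂ` invariant under all reflections `s_α` is a scalar multiple of `P`
(Hunt's quintic).
-/

noncomputable section

namespace Stmt8

open MvPolynomial

/-- The bilinear form on `Λ = ℤ⁷`. -/
def dotZ (x y : Fin 7 → ℤ) : ℤ := x 0 * y 0 - ∑ i : Fin 6, x i.succ * y i.succ

/-- The bilinear form on `ℂ⁷`. -/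
def dotC (x y : Fin 7 → ℂ) : ℂ := x 0 * y 0 - ∑ i : Fin 6, x i.succ * y i.succ

/-- The canonical class `K = (−3,1,1,1,1,1,1)`. -/
def K : Fin 7 → ℤ := ![-3, 1, 1, 1, 1, 1, 1]

/-- The canonical class as a complex vector. -/
def KC : Fin 7 → ℂ := fun i => (K i : ℂ)

/-- A line class: `e·e = −1` and `e·K = −1` (there are 27 of them). -/
def IsLine (e : Fin 7 → ℤ) : Prop := dotZ e e = -1 ∧ dotZ e K = -1

/-- A root: `α·α = −2` and `α·K = 0`. -/
def IsRoot (α : Fin 7 → ℤ) : Prop := dotZ α α = -2 ∧ dotZ α K = 0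

/-- The weight `w_c = c + K/3` attached to a line class `c`. -/
def weight (c : Fin 7 → ℤ) : Fin 7 → ℂ := fun i => (c i : ℂ) + KC i / 3

/-- The reflection `s_α` acting on `ℂ⁷`: `s_α(x) = x + (x·α)α`. -/
def reflC (α : Fin 7 → ℤ) (x : Fin 7 → ℂ) : Fin 7 → ℂ :=
  x + dotC x (fun i => (α i : ℂ)) • fun i => (α i : ℂ)

/-- Hunt's quintic function `P(x) = Σ_c (w_c · x)⁵`, summed over all 27 line
classes `c`. -/
def P (x : Fin 7 → ℂ) : ℂ := ∑ᶠ c ∈ {e : Fin 7 → ℤ | IsLine e}, (dotC (weight c) x) ^ 5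

/-- The 27 lines. -/
def lineVec : Fin 27 → Fin 7 → ℤ := ![
    ![0, 1, 0, 0, 0, 0, 0], ![0, 0, 1, 0, 0, 0, 0], ![0, 0, 0, 1, 0, 0, 0],
    ![0, 0, 0, 0, 1, 0, 0], ![0, 0, 0, 0, 0, 1, 0], ![0, 0, 0, 0, 0, 0, 1],
    ![1, -1, -1, 0, 0, 0, 0], ![1, -1, 0, -1, 0, 0, 0], ![1, -1, 0, 0, -1, 0, 0],
    ![1, -1, 0, 0, 0, -1, 0], ![1, -1, 0, 0, 0, 0, -1], ![1, 0, -1, -1, 0, 0, 0],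
    ![1, 0, -1, 0, -1, 0, 0], ![1, 0, -1, 0, 0, -1, 0], ![1, 0, -1, 0, 0, 0, -1],
    ![1, 0, 0, -1, -1, 0, 0], ![1, 0, 0, -1, 0, -1, 0], ![1, 0, 0, -1, 0, 0, -1],
    ![1, 0, 0, 0, -1, -1, 0], ![1, 0, 0, 0, -1, 0, -1], ![1, 0, 0, 0, 0, -1, -1],
    ![2, 0, -1, -1, -1, -1, -1], ![2, -1, 0, -1, -1, -1, -1], ![2, -1, -1, 0, -1, -1, -1],
    ![2, -1, -1, -1, 0, -1, -1], ![2, -1, -1, -1, -1, 0, -1], ![2, -1, -1, -1, -1, -1, 0]]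

/-- The 22 monomials. -/
def mon : Fin 22 → Fin 6 → ℕ := ![
    ![1, 1, 1, 1, 1, 0], ![0, 0, 0, 0, 0, 5], ![2, 0, 0, 0, 0, 3],
    ![0, 2, 0, 0, 0, 3], ![0, 0, 2, 0, 0, 3], ![0, 0, 0, 2, 0, 3],
    ![0, 0, 0, 0, 2, 3], ![4, 0, 0, 0, 0, 1], ![0, 4, 0, 0, 0, 1],
    ![0, 0, 4, 0, 0, 1], ![0, 0, 0, 4, 0, 1], ![0, 0, 0, 0, 4, 1],
    ![2, 2, 0, 0, 0, 1], ![2, 0, 2, 0, 0, 1], ![2, 0, 0, 2, 0, 1],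
    ![2, 0, 0, 0, 2, 1], ![0, 2, 2, 0, 0, 1], ![0, 2, 0, 2, 0, 1],
    ![0, 2, 0, 0, 2, 1], ![0, 0, 2, 2, 0, 1], ![0, 0, 2, 0, 2, 1],
    ![0, 0, 0, 2, 2, 1]]

/-- The finset of lines. -/
def lineSet : Finset (Fin 7 → ℤ) := Finset.univ.image lineVec

theorem lineVec_inj : Function.Injective lineVec := by
  unfold lineVec
  decide +kernel

theorem mon_inj : Function.Injective mon := by
  unfold mon
  decide +kernel

theorem lines_fwd : ∀ i, dotZ (lineVec i) (lineVec i) = -1 ∧ dotZ (lineVec i) K = -1 := by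
  unfold lineVec dotZ K
  decide +kernel

theorem lines_bwd : ∀ e ∈ Fintype.piFinset
    (fun i : Fin 7 => if i = 0 then ({0, 1, 2} : Finset ℤ) else {-1, 0, 1}),
    dotZ e e = -1 → dotZ e K = -1 → e ∈ lineSet := by
  unfold lineSet lineVec dotZ K
  decide +kernel

theorem mon_bwd : ∀ m ∈ Finset.Nat.antidiagonalTuple 6 5,
    (∀ i : Fin 4, Even (m i.castSucc.castSucc + m i.succ.castSucc)) →
    m ∈ Finset.univ.image mon := by
  unfold mon
  decide +kernel

theorem isLine_iff (e : Fin 7 → ℤ) : IsLine e ↔ e ∈ lineSet := by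
  constructor
  · rintro ⟨h1, h2⟩
    refine lines_bwd e ?_ h1 h2
    simp only [dotZ, K, Fin.sum_univ_succ] at h1 h2
    simp at h1 h2
    have e0 : 0 ≤ e 0 ∧ e 0 ≤ 2 := by
      have hc : (e 1 + e 2 + e 3 + e 4 + e 5 + e 6) ^ 2 ≤
          6 * (e 1 ^ 2 + e 2 ^ 2 + e 3 ^ 2 + e 4 ^ 2 + e 5 ^ 2 + e 6 ^ 2) := by
        nlinarith [sq_nonneg (e 1 - e 2), sq_nonneg (e 1 - e 3), sq_nonneg (e 1 - e 4),
          sq_nonneg (e 1 - e 5), sq_nonneg (e 1 - e 6), sq_nonneg (e 2 - e 3),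
          sq_nonneg (e 2 - e 4), sq_nonneg (e 2 - e 5), sq_nonneg (e 2 - e 6),
          sq_nonneg (e 3 - e 4), sq_nonneg (e 3 - e 5), sq_nonneg (e 3 - e 6),
          sq_nonneg (e 4 - e 5), sq_nonneg (e 4 - e 6), sq_nonneg (e 5 - e 6)]
      have hs : e 1 + e 2 + e 3 + e 4 + e 5 + e 6 = 1 - 3 * e 0 := by linarith
      have hq : e 1 ^ 2 + e 2 ^ 2 + e 3 ^ 2 + e 4 ^ 2 + e 5 ^ 2 + e 6 ^ 2 = e 0 ^ 2 + 1 := by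
        linarith
      rw [hs, hq] at hc
      constructor <;> nlinarith
    have key : ∀ t : ℤ, 0 ≤ t * t - t := fun t => by
      rcases le_or_gt t 0 with h | h <;> nlinarith
    have key2 : ∀ t : ℤ, 0 ≤ t * t + t := fun t => by
      have := key (-t); linarith
    have fin : ∀ t : ℤ, (t * t - t ≤ 0 ∨ t * t + t ≤ 0) → t = -1 ∨ t = 0 ∨ t = 1 := by
      intro t ht
      have a : -1 ≤ t := by rcases ht with h | h <;> nlinarith
      have b : t ≤ 1 := by rcases ht with h | h <;> nlinarith
      omega
    have all : ∀ t ∈ [e 1, e 2, e 3, e 4, e 5, e 6], t = -1 ∨ t = 0 ∨ t = 1 := by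
      intro t ht
      apply fin
      have c0 : e 0 = 0 ∨ e 0 = 1 ∨ e 0 = 2 := by omega
      have q1 := key (e 1)
      have q2 := key (e 2)
      have q3 := key (e 3)
      have q4 := key (e 4)
      have q5 := key (e 5)
      have q6 := key (e 6)
      have r1 := key2 (e 1)
      have r2 := key2 (e 2)
      have r3 := key2 (e 3)
      have r4 := key2 (e 4)
      have r5 := key2 (e 5)
      have r6 := key2 (e 6)
      simp at ht
      rcases c0 with h | h | h
      · left
        rw [h] at h1 h2
        rcases ht with rfl | rfl | rfl | rfl | rfl | rfl <;> linarith
      · right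
        rw [h] at h1 h2
        rcases ht with rfl | rfl | rfl | rfl | rfl | rfl <;> linarith
      · right
        rw [h] at h1 h2
        rcases ht with rfl | rfl | rfl | rfl | rfl | rfl <;> linarith
    rw [Fintype.mem_piFinset]
    intro i
    have c0 : e 0 = 0 ∨ e 0 = 1 ∨ e 0 = 2 := by omega
    fin_cases i
    · simpa using c0
    all_goals
      simpa using all _ (by simp)
  · intro h
    simp only [lineSet, Finset.mem_image, Finset.mem_univ, true_and] at h
    obtain ⟨i, rfl⟩ := h
    exact lines_fwd i

theorem P_eq (x : Fin 7 → ℂ) : P x = ∑ c ∈ lineSet, (dotC (weight c) x) ^ 5 := by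
  have : {e : Fin 7 → ℤ | IsLine e} = (lineSet : Set (Fin 7 → ℤ)) := by
    ext e
    simp [isLine_iff]
  unfold P
  rw [this, finsum_mem_coe_finset]

/-- The integral reflection. -/
def reflZ (α x : Fin 7 → ℤ) : Fin 7 → ℤ := x + dotZ x α • α

theorem reflZ_line (α : Fin 7 → ℤ) (hα : IsRoot α) (c : Fin 7 → ℤ) (hc : IsLine c) :
    IsLine (reflZ α c) := by
  obtain ⟨a1, a2⟩ := hα
  obtain ⟨c1, c2⟩ := hc
  constructor
  · have : dotZ (reflZ α c) (reflZ α c) =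
        dotZ c c + 2 * dotZ c α ^ 2 + dotZ c α ^ 2 * dotZ α α := by
      unfold reflZ
      generalize hd : dotZ c α = d
      have : dotZ (c + d • α) (c + d • α) = dotZ c c + 2 * d * dotZ c α + d ^ 2 * dotZ α α := by
        simp only [dotZ, Fin.sum_univ_succ, Pi.add_apply, Pi.smul_apply, smul_eq_mul]
        simp
        ring
      rw [this, hd]
      ring
    rw [this, c1, a1]
    ring
  · have : dotZ (reflZ α c) K = dotZ c K + dotZ c α * dotZ α K := by
      unfold reflZ
      generalize dotZ c α = d
      simp only [dotZ, Fin.sum_univ_succ, Pi.add_apply, Pi.smul_apply, smul_eq_mul]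
      ring
    rw [this, c2, a2]
    ring

theorem reflZ_invol (α : Fin 7 → ℤ) (hα : IsRoot α) (c : Fin 7 → ℤ) :
    reflZ α (reflZ α c) = c := by
  obtain ⟨a1, a2⟩ := hα
  have : dotZ (reflZ α c) α = - dotZ c α := by
    have : dotZ (reflZ α c) α = dotZ c α + dotZ c α * dotZ α α := by
      have aux : ∀ d : ℤ, dotZ (c + d • α) α = dotZ c α + d * dotZ α α := by
        intro d
        simp only [dotZ, Fin.sum_univ_succ, Pi.add_apply, Pi.smul_apply, smul_eq_mul]
        ring
      exact aux _
    rw [this, a1]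
    ring
  rw [reflZ, this, reflZ]
  simp

theorem dotZ_cast (x y : Fin 7 → ℤ) :
    dotC (fun i => (x i : ℂ)) (fun i => (y i : ℂ)) = (dotZ x y : ℂ) := by
  simp [dotC, dotZ]

theorem dot_weight_refl (α : Fin 7 → ℤ) (hα : IsRoot α) (c : Fin 7 → ℤ) (x : Fin 7 → ℂ) :
    dotC (weight c) (reflC α x) = dotC (weight (reflZ α c)) x := by
  obtain ⟨a1, a2⟩ := hα
  have h1 : dotC (weight c) (reflC α x) = dotC (weight c) x +
      dotC x (fun i => (α i : ℂ)) * ((dotZ c α : ℂ) + (dotZ α K : ℂ) / 3) := by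
    rw [← dotZ_cast, ← dotZ_cast]
    unfold reflC
    generalize dotC x (fun i => (α i : ℂ)) = d
    simp only [dotC, weight, KC, Fin.sum_univ_succ, Pi.add_apply, Pi.smul_apply, smul_eq_mul]
    ring
  have h2 : dotC (weight (reflZ α c)) x = dotC (weight c) x +
      (dotZ c α : ℂ) * dotC x (fun i => (α i : ℂ)) := by
    unfold reflZ
    generalize dotZ c α = d
    simp only [dotC, weight, KC, Fin.sum_univ_succ, Pi.add_apply, Pi.smul_apply, smul_eq_mul]
    push_cast
    ring
  rw [h1, h2, a2]
  push_cast
  ring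

theorem P_inv (α : Fin 7 → ℤ) (hα : IsRoot α) (x : Fin 7 → ℂ) : P (reflC α x) = P x := by
  unfold P
  refine finsum_mem_eq_of_bijOn (reflZ α) ⟨fun c hc => reflZ_line α hα c hc, ?_, ?_⟩ ?_
  · intro c _ d _ h
    rw [← reflZ_invol α hα c, ← reflZ_invol α hα d, h]
  · intro c hc
    exact ⟨reflZ α c, reflZ_line α hα c hc, reflZ_invol α hα c⟩
  · intro c _
    rw [dot_weight_refl α hα]

/-- Linear form polynomial `x ↦ w · x`. -/
def linPoly (w : Fin 7 → ℂ) : MvPolynomial (Fin 7) ℂ :=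
  C (w 0) * X 0 - ∑ i : Fin 6, C (w i.succ) * X i.succ

theorem linPoly_eval (w x : Fin 7 → ℂ) : eval x (linPoly w) = dotC w x := by
  simp [linPoly, dotC]

theorem linPoly_hom (w : Fin 7 → ℂ) : (linPoly w).IsHomogeneous 1 := by
  unfold linPoly
  refine IsHomogeneous.sub (isHomogeneous_C_mul_X _ _) (IsHomogeneous.sum _ _ _ fun i _ => isHomogeneous_C_mul_X _ _)

/-- `P` as a polynomial. -/
def Ppoly : MvPolynomial (Fin 7) ℂ := ∑ c ∈ lineSet, linPoly (weight c) ^ 5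

theorem Ppoly_eval (x : Fin 7 → ℂ) : eval x Ppoly = P x := by
  simp [Ppoly, P_eq, linPoly_eval]

theorem Ppoly_hom : Ppoly.IsHomogeneous 5 :=
  IsHomogeneous.sum _ _ _ fun c _ => by simpa using (linPoly_hom (weight c)).pow 5

theorem P_ne : dotC ![-3, 1, 1, 1, 1, 1, 4] KC = 0 ∧ P ![-3, 1, 1, 1, 1, 1, 4] ≠ 0 := by
  constructor
  · simp [dotC, KC, K, Fin.sum_univ_succ]
    norm_num
  · rw [P_eq, lineSet, Finset.sum_image (fun a _ b _ h => lineVec_inj h)]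
    have : ∀ i, dotC (weight (lineVec i)) ![-3, 1, 1, 1, 1, 1, 4] =
        ((dotZ (lineVec i) ![-3, 1, 1, 1, 1, 1, 4] - 0 : ℤ) : ℂ) := by
      intro i
      have h := (lines_fwd i).2
      rw [Int.sub_zero, ← dotZ_cast]
      simp [dotC, weight, KC, K, Fin.sum_univ_succ]
      ring
    simp_rw [this]
    norm_cast

/-- Adjacent swap index. -/
abbrev sw (i : Fin 4) : Equiv.Perm (Fin 6) := Equiv.swap i.castSucc.castSucc i.succ.castSucc

/-- Sign vector. -/
def sg (i : Fin 4) (k : Fin 6) : ℂ :=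
  if k = i.castSucc.castSucc ∨ k = i.succ.castSucc then -1 else 1

/-- The extra reflection. -/
def spin (y : Fin 6 → ℂ) : Fin 6 → ℂ :=
  let S := y 0 + y 1 + y 2 + y 3 + y 4
  let z := y 5
  let z' := (S - 2 * y 4 + z) / 4
  ![y 0 + z - z', y 1 + z - z', y 2 + z - z', y 3 + z - z', (S - z - 2 * z') / 2, z']

/-- Hunt's quintic in `D₅` coordinates. -/
def R (y : Fin 6 → ℂ) : ℂ :=
  y 0 * y 1 * y 2 * y 3 * y 4 - 3 / 8 * y 5 ^ 5
  + 1 / 4 * y 5 ^ 3 * (y 0 ^ 2 + y 1 ^ 2 + y 2 ^ 2 + y 3 ^ 2 + y 4 ^ 2)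
  + 1 / 8 * y 5 * (y 0 ^ 4 + y 1 ^ 4 + y 2 ^ 4 + y 3 ^ 4 + y 4 ^ 4)
  - 1 / 4 * y 5 * (y 0 ^ 2 * y 1 ^ 2 + y 0 ^ 2 * y 2 ^ 2 + y 0 ^ 2 * y 3 ^ 2 + y 0 ^ 2 * y 4 ^ 2
    + y 1 ^ 2 * y 2 ^ 2 + y 1 ^ 2 * y 3 ^ 2 + y 1 ^ 2 * y 4 ^ 2
    + y 2 ^ 2 * y 3 ^ 2 + y 2 ^ 2 * y 4 ^ 2 + y 3 ^ 2 * y 4 ^ 2)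

theorem eval_aeval_aux {n k : ℕ} (f : Fin n → MvPolynomial (Fin k) ℂ) (y : Fin k → ℂ)
    (q : MvPolynomial (Fin n) ℂ) : eval y (aeval f q) = eval (fun i => eval y (f i)) q := by
  induction q using MvPolynomial.induction_on with
  | C a => simp
  | add p q hp hq => rw [map_add, map_add, map_add, hp, hq]
  | mul_X p i hp => rw [map_mul, map_mul, map_mul, hp, aeval_X, eval_X]

theorem coeff_scale (s : Fin 6 → ℂ) (r : MvPolynomial (Fin 6) ℂ) (m : Fin 6 →₀ ℕ) :
    coeff m (aeval (fun i => C (s i) * X i : Fin 6 → MvPolynomial (Fin 6) ℂ) r)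
      = (∏ i, s i ^ m i) * coeff m r := by
  induction r using MvPolynomial.induction_on' with
  | monomial u a =>
    have : aeval (fun i => C (s i) * X i : Fin 6 → MvPolynomial (Fin 6) ℂ) (monomial u a)
        = monomial u ((∏ i, s i ^ u i) * a) := by
      rw [aeval_monomial, Finsupp.prod_fintype _ _ (by simp)]
      simp_rw [mul_pow, Finset.prod_mul_distrib, ← C_pow]
      rw [monomial_eq, Finsupp.prod_fintype _ _ (by simp)]
      simp only [map_mul, map_prod, algebraMap_eq]
      ring
    rw [this, coeff_monomial, coeff_monomial]
    split_ifs with h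
    · rw [h]
    · simp
  | add p q hp hq => rw [map_add, coeff_add, coeff_add, hp, hq, mul_add]

theorem key (r : MvPolynomial (Fin 6) ℂ) (hr : r.IsHomogeneous 5)
    (hsw : ∀ (i : Fin 4) y, eval (y ∘ sw i) r = eval y r)
    (hsg : ∀ (i : Fin 4) y, eval (fun k => sg i k * y k) r = eval y r)
    (hsp : ∀ y, eval (spin y) r = eval y r) :
    ∃ a, ∀ y, eval y r = a * R y := by
  obtain ⟨c, hcdef⟩ : ∃ c : (Fin 6 → ℕ) → ℂ,
      ∀ m, c m = coeff (Finsupp.equivFunOnFinite.symm m) r := ⟨_, fun _ => rfl⟩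
  have hc : ∀ (i : Fin 4) (m m' : Fin 6 → ℕ), m' = m ∘ sw i → c m = c m' := by
    rintro i m m' rfl
    have h1 : rename (sw i) r = r := by
      apply MvPolynomial.funext
      intro y
      rw [eval_rename, hsw]
    rw [hcdef, hcdef]
    conv_rhs => rw [← coeff_rename_mapDomain (sw i) (sw i).injective, h1]
    congr 1
    ext k
    rw [Finsupp.mapDomain_equiv_apply]
    simp [sw]
  have hpar : ∀ (i : Fin 4) (m : Fin 6 → ℕ),
      c m ≠ 0 → Even (m i.castSucc.castSucc + m i.succ.castSucc) := by
    intro i m hm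
    by_contra hodd
    rw [Nat.not_even_iff_odd] at hodd
    have h1 : aeval (fun k => C (sg i k) * X k : Fin 6 → MvPolynomial (Fin 6) ℂ) r = r := by
      apply MvPolynomial.funext
      intro y
      conv_rhs => rw [← hsg i y]
      rw [eval_aeval_aux]
      simp
    have h2 := coeff_scale (sg i) r (Finsupp.equivFunOnFinite.symm m)
    rw [h1, ← hcdef] at h2
    have h3 : ∏ k, sg i k ^ m k = -1 := by
      rw [← hodd.neg_one_pow (α := ℂ), pow_add]
      fin_cases i <;> simp [sg, Fin.prod_univ_succ]
    simp only [Finsupp.equivFunOnFinite_symm_apply_apply] at h2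
    rw [h3] at h2
    apply hm
    linear_combination h2 / 2
  have hF : ∀ y, eval y r = ∑ k : Fin 22, c (mon k) * ∏ i, y i ^ mon k i := by
    intro y
    rw [← Finset.sum_image (s := Finset.univ) (g := mon) (f := fun m => c m * ∏ i, y i ^ m i)
      (fun a _ b _ h => mon_inj h), eval_eq']
    have : ∀ d : Fin 6 →₀ ℕ, coeff d r * ∏ i, y i ^ d i = c d * ∏ i, y i ^ d i := by
      intro d
      rw [hcdef]
      congr 3
      ext; simp
    simp_rw [this]
    rw [← Finset.sum_image (s := r.support) (g := fun d : Fin 6 →₀ ℕ => (d : Fin 6 → ℕ))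
      (f := fun m => c m * ∏ i, y i ^ m i) (fun a _ b _ h => DFunLike.coe_injective h)]
    apply Finset.sum_subset
    · intro m hm
      simp only [Finset.mem_image] at hm
      obtain ⟨d, hd, rfl⟩ := hm
      apply mon_bwd
      · rw [Finset.Nat.mem_antidiagonalTuple]
        have := hr (mem_support_iff.1 hd)
        simpa [Finsupp.weight_apply, Finsupp.sum_fintype] using this
      · intro i
        apply hpar
        rw [hcdef]
        have : Finsupp.equivFunOnFinite.symm (d : Fin 6 → ℕ) = d := by ext; simp
        rw [this]
        exact mem_support_iff.1 hd
    · intro m _ hm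
      have : c m = 0 := by
        by_contra h
        apply hm
        rw [Finset.mem_image]
        refine ⟨Finsupp.equivFunOnFinite.symm m, ?_, ?_⟩
        · rw [mem_support_iff, ← hcdef]
          exact h
        · ext; simp
      rw [this, zero_mul]
  have k0 := hc 0 ![0, 2, 0, 0, 0, 3] ![2, 0, 0, 0, 0, 3] (by decide)
  have k1 := hc 1 ![0, 0, 2, 0, 0, 3] ![0, 2, 0, 0, 0, 3] (by decide)
  have k2 := hc 2 ![0, 0, 0, 2, 0, 3] ![0, 0, 2, 0, 0, 3] (by decide)
  have k3 := hc 3 ![0, 0, 0, 0, 2, 3] ![0, 0, 0, 2, 0, 3] (by decide)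
  have k4 := hc 0 ![0, 4, 0, 0, 0, 1] ![4, 0, 0, 0, 0, 1] (by decide)
  have k5 := hc 1 ![0, 0, 4, 0, 0, 1] ![0, 4, 0, 0, 0, 1] (by decide)
  have k6 := hc 2 ![0, 0, 0, 4, 0, 1] ![0, 0, 4, 0, 0, 1] (by decide)
  have k7 := hc 3 ![0, 0, 0, 0, 4, 1] ![0, 0, 0, 4, 0, 1] (by decide)
  have k8 := hc 1 ![2, 0, 2, 0, 0, 1] ![2, 2, 0, 0, 0, 1] (by decide)
  have k9 := hc 2 ![2, 0, 0, 2, 0, 1] ![2, 0, 2, 0, 0, 1] (by decide)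
  have k10 := hc 3 ![2, 0, 0, 0, 2, 1] ![2, 0, 0, 2, 0, 1] (by decide)
  have k11 := hc 0 ![0, 2, 2, 0, 0, 1] ![2, 0, 2, 0, 0, 1] (by decide)
  have k12 := hc 2 ![0, 2, 0, 2, 0, 1] ![0, 2, 2, 0, 0, 1] (by decide)
  have k13 := hc 3 ![0, 2, 0, 0, 2, 1] ![0, 2, 0, 2, 0, 1] (by decide)
  have k14 := hc 1 ![0, 0, 2, 2, 0, 1] ![0, 2, 0, 2, 0, 1] (by decide)
  have k15 := hc 3 ![0, 0, 2, 0, 2, 1] ![0, 0, 2, 2, 0, 1] (by decide)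
  have k16 := hc 2 ![0, 0, 0, 2, 2, 1] ![0, 0, 2, 0, 2, 1] (by decide)
  simp only [mon, Fin.sum_univ_succ, Fin.prod_univ_succ] at hF
  simp [-mul_eq_mul_left_iff] at hF
  simp only [k16, k15, k14, k13, k12, k11, k10, k9, k8, k7, k6, k5, k4, k3, k2, k1, k0] at hF
  generalize c ![1, 1, 1, 1, 1, 0] = A at hF
  generalize c ![0, 0, 0, 0, 0, 5] = E at hF
  generalize c ![2, 0, 0, 0, 0, 3] = D at hF
  generalize c ![4, 0, 0, 0, 0, 1] = B at hF
  generalize c ![2, 2, 0, 0, 0, 1] = G at hF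
  have e1 := hsp ![0, 0, 0, 0, 0, 1]
  have e2 := hsp ![0, 0, 0, 0, 1, 0]
  have e3 := hsp ![0, 0, 0, 0, 1, 1]
  have e4 := hsp ![0, 0, 0, 0, 1, 2]
  rw [hF, hF] at e1 e2 e3 e4
  simp [spin] at e1 e2 e3 e4
  ring_nf at e1 e2 e3 e4
  have f1 : E = -3 / 8 * A := by grind
  have f2 : D = 1 / 4 * A := by grind
  have f3 : G = -1 / 4 * A := by grind
  have f4 : B = 1 / 8 * A := by grind
  refine ⟨A, fun y => ?_⟩
  rw [hF, f1, f2, f3, f4, R]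
  ring

/-- `D₅` coordinates on `K^⊥`. -/
def phi (y : Fin 6 → ℂ) : Fin 7 → ℂ :=
  let S := y 0 + y 1 + y 2 + y 3 + y 4
  ![-S - 3 * y 5, S - 2 * y 0 + y 5, S - 2 * y 1 + y 5, S - 2 * y 2 + y 5, S - 2 * y 3 + y 5,
    S - 2 * y 4 + y 5, 4 * y 5]

/-- Polynomial version of `phi`. -/
def phiPoly : Fin 7 → MvPolynomial (Fin 6) ℂ :=
  ![-(X 0 + X 1 + X 2 + X 3 + X 4) - C 3 * X 5,
    (X 0 + X 1 + X 2 + X 3 + X 4) - C 2 * X 0 + X 5,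
    (X 0 + X 1 + X 2 + X 3 + X 4) - C 2 * X 1 + X 5,
    (X 0 + X 1 + X 2 + X 3 + X 4) - C 2 * X 2 + X 5,
    (X 0 + X 1 + X 2 + X 3 + X 4) - C 2 * X 3 + X 5,
    (X 0 + X 1 + X 2 + X 3 + X 4) - C 2 * X 4 + X 5, C 4 * X 5]

theorem phiPoly_hom (i : Fin 7) : (phiPoly i).IsHomogeneous 1 := by
  have hS : (X 0 + X 1 + X 2 + X 3 + X 4 : MvPolynomial (Fin 6) ℂ).IsHomogeneous 1 :=
    ((((isHomogeneous_X _ _).add (isHomogeneous_X _ _)).add (isHomogeneous_X _ _)).add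
      (isHomogeneous_X _ _)).add (isHomogeneous_X _ _)
  have h1 : ∀ k : Fin 6,
      ((X 0 + X 1 + X 2 + X 3 + X 4) - C 2 * X k + X 5 : MvPolynomial (Fin 6) ℂ).IsHomogeneous 1 :=
    fun k => (hS.sub (isHomogeneous_C_mul_X _ _)).add (isHomogeneous_X _ _)
  fin_cases i
  · exact hS.neg.sub (isHomogeneous_C_mul_X _ _)
  · exact h1 0
  · exact h1 1
  · exact h1 2
  · exact h1 3
  · exact h1 4
  · exact isHomogeneous_C_mul_X _ _

theorem phiPoly_eval (y : Fin 6 → ℂ) (q : MvPolynomial (Fin 7) ℂ) :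
    eval y (aeval phiPoly q) = eval (phi y) q := by
  rw [eval_aeval_aux]
  have : (fun i => eval y (phiPoly i)) = phi y := by
    funext i
    fin_cases i <;> simp [phiPoly, phi]
  rw [this]

theorem phi_K (y : Fin 6 → ℂ) : dotC (phi y) KC = 0 := by
  simp [dotC, KC, K, phi, Fin.sum_univ_succ]
  ring

theorem phi_surj (x : Fin 7 → ℂ) (hx : dotC x KC = 0) : ∃ y, phi y = x := by
  simp [dotC, KC, K, Fin.sum_univ_succ] at hx
  have hx2 : x 1 = -3 * x 0 - x 2 - x 3 - x 4 - x 5 - x 6 := by linear_combination -hx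
  refine ⟨![(-x 0 - x 6 / 2 - x 1) / 2, (-x 0 - x 6 / 2 - x 2) / 2, (-x 0 - x 6 / 2 - x 3) / 2,
    (-x 0 - x 6 / 2 - x 4) / 2, (-x 0 - x 6 / 2 - x 5) / 2, x 6 / 4], ?_⟩
  funext i
  fin_cases i <;> simp [phi, hx2] <;> ring

/-- Roots giving swaps. -/
def rootA : Fin 4 → Fin 7 → ℤ :=
  ![![0, 1, -1, 0, 0, 0, 0], ![0, 0, 1, -1, 0, 0, 0], ![0, 0, 0, 1, -1, 0, 0],
    ![0, 0, 0, 0, 1, -1, 0]]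

/-- Roots giving signed swaps. -/
def rootB : Fin 4 → Fin 7 → ℤ :=
  ![![1, 0, 0, -1, -1, -1, 0], ![1, -1, 0, 0, -1, -1, 0], ![1, -1, -1, 0, 0, -1, 0],
    ![1, -1, -1, -1, 0, 0, 0]]

theorem rootA_root (i : Fin 4) : IsRoot (rootA i) := by
  revert i
  unfold IsRoot rootA dotZ K
  decide +kernel

theorem rootB_root (i : Fin 4) : IsRoot (rootB i) := by
  revert i
  unfold IsRoot rootB dotZ K
  decide +kernel

theorem rootS_root : IsRoot ![0, 0, 0, 0, 0, 1, -1] := by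
  unfold IsRoot dotZ K
  decide +kernel

theorem reflA (i : Fin 4) (y : Fin 6 → ℂ) : reflC (rootA i) (phi y) = phi (y ∘ sw i) := by
  funext k
  fin_cases i <;> fin_cases k <;>
    simp [reflC, rootA, phi, dotC, Fin.sum_univ_succ, sw, Equiv.swap_apply_def] <;> ring

theorem reflB (i : Fin 4) (y : Fin 6 → ℂ) :
    reflC (rootB i) (phi y) = phi (fun k => sg i k * y (sw i k)) := by
  funext k
  fin_cases i <;> fin_cases k <;>
    simp [reflC, rootB, phi, dotC, Fin.sum_univ_succ, sw, sg, Equiv.swap_apply_def] <;> ring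

theorem reflS (y : Fin 6 → ℂ) :
    reflC ![0, 0, 0, 0, 0, 1, -1] (phi y) = phi (spin y) := by
  funext k
  fin_cases k <;>
    simp [reflC, phi, dotC, Fin.sum_univ_succ, spin] <;> ring

theorem key2 (q : MvPolynomial (Fin 7) ℂ) (hq : q.IsHomogeneous 5)
    (hinv : ∀ α : Fin 7 → ℤ, IsRoot α → ∀ x : Fin 7 → ℂ, dotC x KC = 0 →
        eval (reflC α x) q = eval x q) :
    ∃ a, ∀ y, eval (phi y) q = a * R y := by
  have h := key (aeval phiPoly q) (by simpa using hq.aeval phiPoly phiPoly_hom)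
  simp only [phiPoly_eval] at h
  apply h
  · intro i y
    rw [← reflA, hinv _ (rootA_root i) _ (phi_K y)]
  · intro i y
    have h1 := hinv _ (rootB_root i) _ (phi_K (y ∘ sw i))
    rw [reflB, ← reflA, hinv _ (rootA_root i) _ (phi_K y)] at h1
    simpa using h1
  · intro y
    rw [← reflS, hinv _ rootS_root _ (phi_K y)]

theorem statement8 :
    (∃ x : Fin 7 → ℂ, dotC x KC = 0 ∧ P x ≠ 0) ∧
    (∀ α : Fin 7 → ℤ, IsRoot α → ∀ x : Fin 7 → ℂ, dotC x KC = 0 → P (reflC α x) = P x) ∧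
    (∀ q : MvPolynomial (Fin 7) ℂ, q.IsHomogeneous 5 →
      (∀ α : Fin 7 → ℤ, IsRoot α → ∀ x : Fin 7 → ℂ, dotC x KC = 0 →
        eval (reflC α x) q = eval x q) →
      ∃ t : ℂ, ∀ x : Fin 7 → ℂ, dotC x KC = 0 → eval x q = t * P x) := by
  refine ⟨⟨_, P_ne⟩, fun α hα x _ => P_inv α hα x, fun q hq hinv => ?_⟩
  obtain ⟨a, ha⟩ := key2 q hq hinv
  obtain ⟨b, hb⟩ := key2 Ppoly Ppoly_hom (fun α hα x _ => by
    rw [Ppoly_eval, Ppoly_eval, P_inv α hα])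
  simp only [Ppoly_eval] at hb
  have hb0 : b ≠ 0 := by
    rintro rfl
    obtain ⟨y, hy⟩ := phi_surj _ P_ne.1
    apply P_ne.2
    rw [← hy, hb, zero_mul]
  refine ⟨a / b, fun x hx => ?_⟩
  obtain ⟨y, rfl⟩ := phi_surj x hx
  rw [ha, hb]
  field_simp

end Stmt8
end
end

section
/- Let t₁ and t₂ be disjoint tritangent sets (no line class in common). Then: (i) for every l ∈ t₁ there is exactly one m ∈ t₂ with l·m = 1 (and l·m = 0 for the other two elements of t₂), which defines a bijection φ : t₁ → t₂; (ii) for every l ∈ t₁ the element −K − l − φ(l) is a line class; and (iii) the set t₃ = {−K − l − φ(l) : l ∈ t₁} is a tritangent set disjoint from both t₁ and t₂. (Thus the 32 tritangents having no line in common with a given tritangent come in pairs, and if the lines of t₁ and of t₂ each pass through an Eckart point, so do the lines of t₃.) -/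
/-!
Statement 13: for disjoint tritangent sets t₁, t₂ there is a bijection
φ : t₁ → t₂ with l·φ(l) = 1 and l·m = 0 for the other two m ∈ t₂; each
−K − l − φ(l) is a line class; and t₃ = {−K − l − φ(l)} is a tritangent set
disjoint from t₁ and t₂.
-/

noncomputable section

namespace Stmt13

/-- The bilinear form `x·y = x₀y₀ − x₁y₁ − ⋯ − x₆y₆` on `Λ = ℤ⁷`. -/
def dot (x y : Fin 7 → ℤ) : ℤ := x 0 * y 0 - ∑ i : Fin 6, x i.succ * y i.succ

/-- The canonical class `K = (−3,1,1,1,1,1,1)`. -/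
def K : Fin 7 → ℤ := ![-3, 1, 1, 1, 1, 1, 1]

/-- A line class: `e·e = −1` and `e·K = −1`. -/
def IsLine (e : Fin 7 → ℤ) : Prop := dot e e = -1 ∧ dot e K = -1

/-- A tritangent set: three line classes summing to `−K`. -/
def IsTritangent (t : Finset (Fin 7 → ℤ)) : Prop :=
  t.card = 3 ∧ (∀ e ∈ t, IsLine e) ∧ ∑ e ∈ t, e = -K

theorem dot_comm (x y : Fin 7 → ℤ) : dot x y = dot y x := by
  simp only [dot, mul_comm]

theorem dot_add (x y z : Fin 7 → ℤ) : dot x (y + z) = dot x y + dot x z := by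
  simp only [dot, Fin.sum_univ_succ, Pi.add_apply, Fin.sum_univ_zero]; ring

theorem dot_sub (x y z : Fin 7 → ℤ) : dot x (y - z) = dot x y - dot x z := by
  simp only [dot, Fin.sum_univ_succ, Pi.sub_apply, Fin.sum_univ_zero]; ring

theorem dot_neg (x y : Fin 7 → ℤ) : dot x (-y) = - dot x y := by
  simp only [dot, Fin.sum_univ_succ, Pi.neg_apply, Fin.sum_univ_zero]; ring

theorem dot_KK : dot K K = 3 := by
  simp [dot, K, Fin.sum_univ_succ]

theorem negdef (v : Fin 7 → ℤ) (h : dot v K = 0) (h2 : 0 ≤ dot v v) : v = 0 := by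
  have e1 : v 0 * (-3) = v 1 + v 2 + v 3 + v 4 + v 5 + v 6 := by
    simp [dot, K, Fin.sum_univ_six] at h
    linarith
  have e2 : v 1 ^ 2 + v 2 ^ 2 + v 3 ^ 2 + v 4 ^ 2 + v 5 ^ 2 + v 6 ^ 2 ≤ v 0 ^ 2 := by
    have h3 : dot v v = v 0 * v 0 - (v 1 * v 1 + v 2 * v 2 + v 3 * v 3 + v 4 * v 4
      + v 5 * v 5 + v 6 * v 6) := by
      simp only [dot, Fin.sum_univ_six]; rfl
    nlinarith
  generalize h0 : v 0 = x0 at *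
  generalize h1 : v 1 = x1 at *
  generalize h2' : v 2 = x2 at *
  generalize h3 : v 3 = x3 at *
  generalize h4 : v 4 = x4 at *
  generalize h5 : v 5 = x5 at *
  generalize h6 : v 6 = x6 at *
  have cs : (x1 + x2 + x3 + x4 + x5 + x6) ^ 2
      ≤ 6 * (x1 ^ 2 + x2 ^ 2 + x3 ^ 2 + x4 ^ 2 + x5 ^ 2 + x6 ^ 2) := by
    linarith [sq_nonneg (x1 - x2), sq_nonneg (x1 - x3), sq_nonneg (x1 - x4),
      sq_nonneg (x1 - x5), sq_nonneg (x1 - x6), sq_nonneg (x2 - x3), sq_nonneg (x2 - x4),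
      sq_nonneg (x2 - x5), sq_nonneg (x2 - x6), sq_nonneg (x3 - x4), sq_nonneg (x3 - x5),
      sq_nonneg (x3 - x6), sq_nonneg (x4 - x5), sq_nonneg (x4 - x6), sq_nonneg (x5 - x6)]
  rw [← e1] at cs
  have z0 : x0 ^ 2 ≤ 0 := by nlinarith
  have p1 := sq_nonneg x1
  have p2 := sq_nonneg x2
  have p3 := sq_nonneg x3
  have p4 := sq_nonneg x4
  have p5 := sq_nonneg x5
  have p6 := sq_nonneg x6
  have sqz : ∀ x : ℤ, x ^ 2 ≤ 0 → x = 0 := fun x hx => by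
    have : x ^ 2 = 0 := le_antisymm hx (sq_nonneg x)
    exact pow_eq_zero_iff (by norm_num) |>.1 this
  funext i
  fin_cases i
  · exact h0.trans (sqz _ z0)
  · exact h1.trans (sqz _ (by linarith))
  · exact h2'.trans (sqz _ (by linarith))
  · exact h3.trans (sqz _ (by linarith))
  · exact h4.trans (sqz _ (by linarith))
  · exact h5.trans (sqz _ (by linarith))
  · exact h6.trans (sqz _ (by linarith))

theorem dot_nonneg {l m : Fin 7 → ℤ} (hl : IsLine l) (hm : IsLine m) (h : l ≠ m) :
    0 ≤ dot l m := by
  by_contra hc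
  apply h
  rw [← sub_eq_zero]
  apply negdef
  · rw [dot_comm, dot_sub, dot_comm K, dot_comm K, hl.2, hm.2]; rfl
  · rw [dot_sub, dot_comm _ l, dot_comm _ m, dot_sub, dot_sub, hl.1, hm.1, dot_comm m l]
    omega

theorem tri_split {t : Finset (Fin 7 → ℤ)} (h : IsTritangent t) : ∃ a b c,
    a ≠ b ∧ a ≠ c ∧ b ≠ c ∧ t = {a, b, c} ∧ IsLine a ∧ IsLine b ∧ IsLine c ∧
    ∀ l, dot l a + dot l b + dot l c = - dot l K := by
  obtain ⟨hc, hl, hs⟩ := h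
  obtain ⟨a, b, c, hab, hac, hbc, rfl⟩ := Finset.card_eq_three.1 hc
  refine ⟨a, b, c, hab, hac, hbc, rfl, hl a (by simp), hl b (by simp), hl c (by simp), ?_⟩
  intro l
  rw [Finset.sum_insert (by simp [hab, hac]), Finset.sum_insert (by simp [hbc]),
    Finset.sum_singleton] at hs
  rw [← dot_neg, ← hs, dot_add, dot_add]; ring

theorem tri_ext {t : Finset (Fin 7 → ℤ)} (h : IsTritangent t) {l : Fin 7 → ℤ}
    (hl : IsLine l) (hn : l ∉ t) :
    ∃ m, m ∈ t ∧ dot l m = 1 ∧ ∀ m' ∈ t, m' ≠ m → dot l m' = 0 := by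
  obtain ⟨a, b, c, hab, hac, hbc, rfl, ha, hb, hc, hs⟩ := tri_split h
  simp only [Finset.mem_insert, Finset.mem_singleton, not_or] at hn
  have h1 := dot_nonneg hl ha hn.1
  have h2 := dot_nonneg hl hb hn.2.1
  have h3 := dot_nonneg hl hc hn.2.2
  have h4 := hs l
  rw [hl.2] at h4
  have : dot l a = 1 ∨ dot l b = 1 ∨ dot l c = 1 := by omega
  simp only [Finset.mem_insert, Finset.mem_singleton]
  rcases this with h | h | h
  · refine ⟨a, by simp, h, ?_⟩
    rintro m (rfl | rfl | rfl) hm <;> first | exact absurd rfl hm | omega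
  · refine ⟨b, by simp, h, ?_⟩
    rintro m (rfl | rfl | rfl) hm <;> first | exact absurd rfl hm | omega
  · refine ⟨c, by simp, h, ?_⟩
    rintro m (rfl | rfl | rfl) hm <;> first | exact absurd rfl hm | omega

theorem tri_int {t : Finset (Fin 7 → ℤ)} (h : IsTritangent t) {l m : Fin 7 → ℤ}
    (hl : l ∈ t) (hm : m ∈ t) (hn : l ≠ m) : dot l m = 1 := by
  obtain ⟨a, b, c, hab, hac, hbc, rfl, ha, hb, hc, hs⟩ := tri_split h
  simp only [Finset.mem_insert, Finset.mem_singleton] at hl hm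
  have h1 := hs a
  have h2 := hs b
  have h3 := hs c
  rw [ha.2, ha.1] at h1
  rw [hb.2, hb.1, dot_comm b a] at h2
  rw [hc.2, hc.1, dot_comm c a, dot_comm c b] at h3
  have e1 := dot_comm b a
  have e2 := dot_comm c a
  have e3 := dot_comm c b
  rcases hl with rfl | rfl | rfl <;> rcases hm with rfl | rfl | rfl <;>
    first | exact absurd rfl hn | omega

theorem statement13 (t₁ t₂ : Finset (Fin 7 → ℤ))
    (h₁ : IsTritangent t₁) (h₂ : IsTritangent t₂) (hdisj : Disjoint t₁ t₂) :
    ∃ φ : (Fin 7 → ℤ) → (Fin 7 → ℤ),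
      (∀ l ∈ t₁, φ l ∈ t₂ ∧ dot l (φ l) = 1 ∧ ∀ m ∈ t₂, m ≠ φ l → dot l m = 0) ∧
      Set.BijOn φ ↑t₁ ↑t₂ ∧
      (∀ l ∈ t₁, IsLine (-K - l - φ l)) ∧
      IsTritangent (t₁.image fun l => -K - l - φ l) ∧
      Disjoint (t₁.image fun l => -K - l - φ l) t₁ ∧
      Disjoint (t₁.image fun l => -K - l - φ l) t₂ := by
  have ex : ∀ l, ∃ m, l ∈ t₁ → m ∈ t₂ ∧ dot l m = 1 ∧ ∀ m' ∈ t₂, m' ≠ m → dot l m' = 0 := by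
    intro l
    by_cases hl : l ∈ t₁
    · obtain ⟨m, hm⟩ := tri_ext h₂ (h₁.2.1 l hl) (Finset.disjoint_left.1 hdisj hl)
      exact ⟨m, fun _ => hm⟩
    · exact ⟨0, fun h => absurd h hl⟩
  choose φ hφ using ex
  have inj : Set.InjOn φ (t₁ : Set (Fin 7 → ℤ)) := by
    intro l hl l' hl' he
    have hl := Finset.mem_coe.1 hl
    have hl' := Finset.mem_coe.1 hl'
    obtain ⟨p, hp, _, hp0⟩ := tri_ext h₁ (h₂.2.1 _ (hφ l hl).1)
      (Finset.disjoint_right.1 hdisj (hφ l hl).1)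
    have q1 := (hφ l hl).2.1
    have q2 := (hφ l' hl').2.1
    rw [← he] at q2
    rw [dot_comm] at q1 q2
    have a1 : l = p := by
      by_contra hc
      have := hp0 l hl hc
      omega
    have a2 : l' = p := by
      by_contra hc
      have := hp0 l' hl' hc
      omega
    rw [a1, a2]
  have himg : t₁.image φ = t₂ := by
    apply Finset.eq_of_subset_of_card_le
    · intro m hm
      obtain ⟨l, hl, rfl⟩ := Finset.mem_image.1 hm
      exact (hφ l hl).1
    · rw [Finset.card_image_of_injOn inj, h₁.1, h₂.1]
  have hd : ∀ x l, dot x (-K - l - φ l) = - dot x K - dot x l - dot x (φ l) := by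
    intro x l
    rw [dot_sub, dot_sub, dot_neg]
  have off : ∀ l ∈ t₁, ∀ l' ∈ t₁, l ≠ l' → dot l (φ l') = 0 := by
    intro l hl l' hl' hne
    exact (hφ l hl).2.2 _ (hφ l' hl').1 (fun h => hne (inj hl hl' h.symm ))
  have same : ∀ l ∈ t₁, dot l (-K - l - φ l) = 1 := by
    intro l hl
    rw [hd, (h₁.2.1 l hl).2, (h₁.2.1 l hl).1, (hφ l hl).2.1]; rfl
  have diff : ∀ l ∈ t₁, ∀ l' ∈ t₁, l ≠ l' → dot l (-K - l' - φ l') = 0 := by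
    intro l hl l' hl' hne
    rw [hd, (h₁.2.1 l hl).2, tri_int h₁ hl hl' hne, off l hl l' hl' hne]; rfl
  have line : ∀ l ∈ t₁, IsLine (-K - l - φ l) := by
    intro l hl
    obtain ⟨a1, a2⟩ := h₁.2.1 l hl
    obtain ⟨b1, b2⟩ := h₂.2.1 _ (hφ l hl).1
    have c := (hφ l hl).2.1
    have k : dot K (-K - l - φ l) = -1 := by
      rw [hd, dot_KK, dot_comm K l, dot_comm K (φ l), a2, b2]; rfl
    refine ⟨?_, by rw [dot_comm, k]⟩
    rw [hd, dot_comm _ K, k, dot_comm _ l, same l hl, dot_comm _ (φ l), hd, b2, b1,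
      dot_comm _ l, c]; rfl
  have inj3 : Set.InjOn (fun l => -K - l - φ l) (t₁ : Set (Fin 7 → ℤ)) := by
    intro l hl l' hl' he
    by_contra hne
    have q1 := same l hl
    have q2 := diff l hl l' hl' hne
    simp only at he
    rw [he] at q1
    omega
  refine ⟨φ, hφ, ⟨fun l hl => (hφ l hl).1, inj, ?_⟩, line, ⟨?_, ?_, ?_⟩, ?_, ?_⟩
  · intro m hm
    rw [← himg] at hm
    simpa using hm
  · rw [Finset.card_image_of_injOn inj3, h₁.1]
  · intro e he
    obtain ⟨l, hl, rfl⟩ := Finset.mem_image.1 he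
    exact line l hl
  · rw [Finset.sum_image inj3, Finset.sum_sub_distrib, Finset.sum_sub_distrib, h₁.2.2,
      ← Finset.sum_image (f := fun x => x) inj, himg, h₂.2.2, Finset.sum_const, h₁.1]
    module
  · rw [Finset.disjoint_left]
    intro e he he'
    obtain ⟨l, hl, rfl⟩ := Finset.mem_image.1 he
    have q := (line l hl).1
    by_cases hc : -K - l - φ l = l
    · have := same l hl
      rw [hc] at this q
      omega
    · have := diff _ he' l hl hc
      omega
  · rw [Finset.disjoint_left]
    intro e he he'
    obtain ⟨l, hl, rfl⟩ := Finset.mem_image.1 he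
    have q := (line l hl).1
    have r := hd (-K - l - φ l) l
    have s := same l hl
    rw [(line l hl).2, q, dot_comm _ l, s] at r
    by_cases hc : -K - l - φ l = φ l
    · have b1 := (hφ l hl).2.1
      rw [hc] at r q
      omega
    · have := (hφ l hl).2.2 _ he' hc
      omega

end Stmt13
end
end
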